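/- arXiv:math/0201175 — 3 statements merged into one kernel-verified Lean document; each statement's English description precedes it below -/
import Mathlib

section
/- Let R be a commutative ring, t ∈ R a non-zero-divisor, and I ⊆ R an ideal such that the pair (R, tI) is henselian. Let R^ := lim_n R/tⁿI be the (t,I)-adic completion of R. Then base change along the natural ring homomorphism R[t⁻¹] → R^[t⁻¹] induces a bijection on isomorphism classes of finitely generated projective modules; that is: (a) for any two finitely generated projective R[t⁻¹]-modules P, P′, if P ⊗_{R[t⁻¹]} R^[t⁻¹] ≅ P′ ⊗_{R[t⁻¹]} R^[t⁻¹] as R^[t⁻¹]-modules, then P ≅ P′; and (b) every finitely generated projective R^[t⁻¹]-module is isomorphic to P ⊗_{R[t⁻¹]} R^[t⁻¹] for some finitely generated projective R[t⁻¹]-module P. -/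
set_option synthInstance.maxHeartbeats 2000000
set_option maxHeartbeats 8000000

/-- The ideal `tⁿI = (tⁿ)·I` of `R`. -/
def tPowIdeal (R : Type) [CommRing R] (t : R) (I : Ideal R) (n : ℕ) : Ideal R :=
  Ideal.span {t ^ n} * I

/-- Transition map `R/tᵐI → R/tⁿI` for `n ≤ m`. -/
def tTrans (R : Type) [CommRing R] (t : R) (I : Ideal R) (n m : ℕ) (hnm : n ≤ m) :
    R ⧸ tPowIdeal R t I m →+* R ⧸ tPowIdeal R t I n :=
  Ideal.Quotient.lift _ (Ideal.Quotient.mk _)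
    (fun a ha => Ideal.Quotient.eq_zero_iff_mem.mpr
      (Ideal.mul_mono (Ideal.span_singleton_le_span_singleton.mpr (pow_dvd_pow t hnm))
        le_rfl ha))

/-- The `(t,I)`-adic completion `R^ := lim_n R/tⁿI`, realized as the subring of compatible
sequences in `∏_n R/tⁿI`. -/
def tIComp (R : Type) [CommRing R] (t : R) (I : Ideal R) :
    Subring (∀ n : ℕ, R ⧸ tPowIdeal R t I n) where
  carrier := { x | ∀ (n m : ℕ) (hnm : n ≤ m), tTrans R t I n m hnm (x m) = x n }
  zero_mem' := fun n m hnm => by simp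
  one_mem' := fun n m hnm => by simp
  add_mem' := fun {x y} hx hy n m hnm => by simp [hx n m hnm, hy n m hnm]
  mul_mem' := fun {x y} hx hy n m hnm => by simp [hx n m hnm, hy n m hnm]
  neg_mem' := fun {x} hx n m hnm => by simp [hx n m hnm]

/-- The canonical ring homomorphism `R → R^`. -/
def toTIComp (R : Type) [CommRing R] (t : R) (I : Ideal R) : R →+* tIComp R t I :=
  RingHom.codRestrict (Pi.ringHom fun n => Ideal.Quotient.mk (tPowIdeal R t I n))
    (tIComp R t I) (fun r n m hnm => Ideal.Quotient.lift_mk _ _ _)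

/-- The canonical ring homomorphism `R[t⁻¹] → R^[t⁻¹]` induced by `R → R^`. -/
noncomputable def locMap (R : Type) [CommRing R] (t : R) (I : Ideal R) :
    Localization.Away t →+* Localization.Away (toTIComp R t I t) :=
  IsLocalization.Away.map (Localization.Away t) (Localization.Away (toTIComp R t I t))
    (toTIComp R t I) t

/-!
Topologize `R^[t⁻¹]` by the images of the `tᵐ • ker (R^ → R/tI)`. Then `R[t⁻¹]` is dense in it, and
there is an open nonunital subring `U` such that `1 + U` consists of units and `U ∩ R[t⁻¹]` comes
from `tI`. Isomorphisms and idempotent matrices over `R^[t⁻¹]` can therefore be approximated by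
matrices over `R[t⁻¹]`. An approximation of an isomorphism is again one, which gives injectivity.

For surjectivity, let `E₀` over `R[t⁻¹]` approximate an idempotent matrix `E`, so that
`E₀ ^ 2 - E₀` is a matrix `d` over `tI`. By Cayley–Hamilton `E₀` is a root of `p (X ^ 2 - X)`, where
`p` is the characteristic polynomial of `d`. Modulo `tI` this is `X ^ n * (X - 1) ^ n`, and the
coprime factorization lifts to `R`. It yields a polynomial `F` with `F(E₀)` idempotent and conjugate
to `E` over `R^[t⁻¹]`.

Since henselian pairs are defined by lifting simple roots of monic polynomials, lifting the
factorization takes an argument: the universal factorization ring of `p (X ^ 2 - X)` is finite over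
`R` and étale at the point with values in `R/tI` given by the factorization. An element of this ring
which modulo `tI` is the idempotent cutting out the point satisfies a monic equation congruent to
`X ^ (n + 1) - X ^ n`. Lifting the simple root `1` of the latter turns the element into an
idempotent, which cuts out a copy of `R`.
-/

open Polynomial

theorem isUnit_of_isUnit_quotientMk {R : Type*} [CommRing R] {J : Ideal R}
    (hJ : J ≤ Ideal.jacobson ⊥) {a : R} (ha : IsUnit (Ideal.Quotient.mk J a)) : IsUnit a :=
  have := isLocalHom_of_le_jacobson_bot J hJ
  isUnit_of_map_unit _ _ ha

theorem isUnit_one_add_of_mem {R : Type*} [CommRing R] {J : Ideal R}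
    (hJ : J ≤ Ideal.jacobson ⊥) {a : R} (ha : a ∈ J) : IsUnit (1 + a) :=
  isUnit_of_isUnit_quotientMk hJ <| by simp [Ideal.Quotient.eq_zero_iff_mem.mpr ha]

section Away

variable (R : Type*) {U W : Type*} [CommRing R] [CommRing U] [CommRing W] [Algebra R U]
  [Algebra U W] [Algebra R W] [IsScalarTower R U W] {r : U}

theorem exists_algebra_localizationAway (hr : IsUnit (algebraMap U W r)) :
    ∃ _ : Algebra (Localization.Away r) W,
      IsScalarTower U (Localization.Away r) W ∧ IsScalarTower R (Localization.Away r) W := by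
  let : Algebra (Localization.Away r) W := (IsLocalization.Away.lift r hr).toAlgebra
  have : IsScalarTower U (Localization.Away r) W :=
    .of_algebraMap_eq fun u ↦ (IsLocalization.Away.lift_eq r hr u).symm
  exact ⟨_, this, .to₁₃₄ R U _ _⟩

theorem formallyUnramified_of_formallyUnramified_away
    [Algebra.FormallyUnramified R (Localization.Away r)] [Algebra.FormallyUnramified U W]
    (hr : IsUnit (algebraMap U W r)) : Algebra.FormallyUnramified R W := by
  obtain ⟨_, _, _⟩ := exists_algebra_localizationAway R hr
  have : Algebra.FormallyUnramified (Localization.Away r) W := .of_restrictScalars U _ _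
  exact .comp R (Localization.Away r) W

theorem formallyEtale_of_formallyUnramified_away
    [Algebra.FormallyUnramified R (Localization.Away r)] [Algebra.FormallyEtale R W]
    (hr : IsUnit (algebraMap U W r)) : Algebra.FormallyEtale U W := by
  obtain ⟨_, _, _⟩ := exists_algebra_localizationAway R hr
  have : Algebra.FormallyEtale U (Localization.Away r) := .of_isLocalization (.powers r)
  have : Algebra.FormallyEtale (Localization.Away r) W := .of_restrictScalars (R := R)
  exact .comp U (Localization.Away r) W

theorem formallyEtale_of_formallyEtale_away
    [Algebra.FormallyEtale R (Localization.Away r)] [Algebra.FormallyEtale U W]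
    (hr : IsUnit (algebraMap U W r)) : Algebra.FormallyEtale R W := by
  obtain ⟨_, _, _⟩ := exists_algebra_localizationAway R hr
  have : Algebra.FormallyEtale U (Localization.Away r) := .of_isLocalization (.powers r)
  have : Algebra.FormallyEtale (Localization.Away r) W := .of_restrictScalars (R := U)
  exact .comp R (Localization.Away r) W

end Away

section Retraction

variable {k C : Type*} [CommRing k] [CommRing C] [Algebra k C] (s : C →ₐ[k] k)

theorem isIdempotentElem_ker_of_formallyUnramified_away {r : C}
    [Algebra.FormallyUnramified k (Localization.Away r)] (hr : IsUnit (s r)) :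
    IsIdempotentElem (RingHom.ker s) := by
  let : Algebra C k := s.toRingHom.toAlgebra
  have : IsScalarTower k C k := .of_algebraMap_eq fun x ↦ (s.commutes x).symm
  have : Algebra.FormallyEtale C k := formallyEtale_of_formallyUnramified_away k hr
  exact (Algebra.FormallyEtale.iff_of_surjective (R := C) (S := k) fun x ↦
    ⟨algebraMap k C x, s.commutes x⟩).mp this

theorem exists_mul_eq_smul_of_isIdempotentElem_ker [Module.Finite k C]
    (hs : IsIdempotentElem (RingHom.ker s)) :
    ∃ e : C, s e = 1 ∧ ∀ c, e * c = s c • e := by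
  have ker_fg : (RingHom.ker s).FG :=
    have : (LinearMap.ker s.toLinearMap).FG :=
      Module.FinitePresentation.fg_ker s.toLinearMap fun x ↦ ⟨algebraMap k C x, s.commutes x⟩
    Submodule.FG.of_restrictScalars k (S := RingHom.ker s) this
  obtain ⟨f, hf, ker_eq⟩ := (Ideal.isIdempotentElem_iff_of_fg _ ker_fg).mp hs
  have mem_ker (c : C) : s c = 0 ↔ ∃ d, d * f = c := by
    rw [← RingHom.mem_ker, ker_eq, Ideal.submodule_span_eq, Ideal.mem_span_singleton']
  have sf : s f = 0 := (mem_ker f).mpr ⟨f, hf.eq⟩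
  refine ⟨1 - f, by simp [sf], fun c ↦ ?_⟩
  obtain ⟨d, hd⟩ := (mem_ker (c - algebraMap k C (s c))).mp (by simp)
  rw [Algebra.smul_def]
  linear_combination -(1 - f) * hd - d * hf.eq

end Retraction

section IdempotentModJ

variable {R U : Type*} [CommRing R] [CommRing U] [Algebra R U] {J : Ideal R}

theorem exists_mul_sub_smul_mem_map [Module.Finite R U] {r : U}
    [Algebra.FormallyUnramified R (Localization.Away r)] (s : U →ₐ[R] R ⧸ J)
    (hr : IsUnit (s r)) :
    ∃ η : U, s η = 1 ∧ ∀ u c, s u = Ideal.Quotient.mk J c →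
      η * u - c • η ∈ J.map (algebraMap R U) := by
  let C := U ⧸ J.map (algebraMap R U)
  have map_le_ker : J.map (algebraMap R U) ≤ RingHom.ker s :=
    Ideal.map_le_iff_le_comap.mpr fun a ha ↦ by
      rw [Ideal.mem_comap, RingHom.mem_ker, s.commutes]
      exact Ideal.Quotient.eq_zero_iff_mem.mpr ha
  let sC : C →ₐ[R ⧸ J] R ⧸ J := AlgHom.extendScalarsOfSurjective Ideal.Quotient.mk_surjective
    (Ideal.Quotient.liftₐ _ s fun u hu ↦ map_le_ker hu)
  let rC : C := algebraMap U C r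
  have : Algebra.FormallyUnramified U (Localization.Away rC) := .comp U C _
  have : Algebra.FormallyUnramified R (Localization.Away rC) :=
    formallyUnramified_of_formallyUnramified_away R (U := U) (r := r) <|
      IsScalarTower.algebraMap_apply U C (Localization.Away rC) r ▸
        IsLocalization.Away.algebraMap_isUnit rC
  have : Algebra.FormallyUnramified (R ⧸ J) (Localization.Away rC) := .of_restrictScalars R _ _
  have : Module.Finite (R ⧸ J) C := .of_restrictScalars_finite R _ _
  obtain ⟨e, he, hes⟩ := exists_mul_eq_smul_of_isIdempotentElem_ker sC
    (isIdempotentElem_ker_of_formallyUnramified_away sC (r := rC) hr)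
  obtain ⟨η, rfl⟩ := Ideal.Quotient.mk_surjective e
  refine ⟨η, he, fun u c huc ↦ Ideal.Quotient.eq.mp ?_⟩
  calc Ideal.Quotient.mk _ (η * u)
      = s u • (Ideal.Quotient.mk _ η : C) := hes (Ideal.Quotient.mk _ u)
    _ = Ideal.Quotient.mk _ (c • η) := by rw [huc]; rfl

end IdempotentModJ

section SimpleRoot

variable {R : Type*} [CommRing R] {J : Ideal R}

theorem exists_represents_map_eq_map {M : Type*} [AddCommGroup M] [Module R M]
    {ι : Type*} [Fintype ι] [DecidableEq ι] {b : ι → M} (hb : Submodule.span R (Set.range b) = ⊤)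
    (f : Module.End R M) (A : Matrix ι ι R)
    (hf : ∀ j, f (b j) - ∑ i, A i j • b i ∈ J • (⊤ : Submodule R M)) :
    ∃ A' : Matrix ι ι R, A'.Represents b f ∧
      A'.map (Ideal.Quotient.mk J) = A.map (Ideal.Quotient.mk J) := by
  rw [← hb, ← Ideal.range_finsuppTotal] at hf
  choose a ha using hf
  refine ⟨A + Matrix.of fun i j ↦ (a j i : R), Matrix.represents_iff'.mpr fun j ↦ ?_, ?_⟩
  · have := ha j
    rw [Ideal.finsuppTotal_apply_eq_of_fintype] at this
    simp only [Matrix.add_apply, Matrix.of_apply, add_smul, Finset.sum_add_distrib]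
    exact add_eq_of_eq_sub' this
  · ext i j
    simp [Ideal.Quotient.eq_zero_iff_mem.mpr (a j i).2]

theorem aeval_charpoly_eq_zero_of_represents {M : Type*} [AddCommGroup M] [Module R M]
    {ι : Type*} [Fintype ι] [DecidableEq ι] {b : ι → M} (hb : Submodule.span R (Set.range b) = ⊤)
    {f : Module.End R M} {A : Matrix ι ι R} (hA : A.Represents b f) :
    aeval f A.charpoly = 0 := by
  let A' : Matrix.isRepresentation R b := ⟨A, f, hA⟩
  have aeval_A' : aeval A' A.charpoly = 0 := by
    ext1
    rw [← Subalgebra.val_apply, ← aeval_algHom_apply]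
    exact A.aeval_self_charpoly
  rw [← Matrix.isRepresentation.eq_toEnd_of_represents R b hb A' hA, aeval_algHom_apply, aeval_A',
    map_zero]

theorem exists_monic_aeval_eq_zero_map_eq {M : Type*} [AddCommGroup M] [Module R M]
    [Module.Finite R M] (f : Module.End R M) (m : M)
    (hm : f m - m ∈ J • (⊤ : Submodule R M))
    (hf : ∀ x, ∃ c : R, f x - c • m ∈ J • (⊤ : Submodule R M)) :
    ∃ (F : R[X]) (n : ℕ), F.Monic ∧ aeval f F = 0 ∧
      F.map (Ideal.Quotient.mk J) = X ^ (n + 1) - X ^ n := by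
  obtain ⟨n, x, hx⟩ := Module.Finite.exists_fin (R := R) (M := M)
  let b : Option (Fin n) → M := fun o ↦ o.elim m x
  have hb : Submodule.span R (Set.range b) = ⊤ :=
    top_le_iff.mp <| hx ▸ Submodule.span_mono (Set.range_subset_iff.mpr fun i ↦ ⟨some i, rfl⟩)
  choose c hc using hf
  let u : Option (Fin n) → R := Pi.single none 1
  let v : Option (Fin n) → R := fun o ↦ o.elim 1 (c ∘ x)
  obtain ⟨A, hA, hAJ⟩ := exists_represents_map_eq_map (J := J) hb f
    (.vecMulVec u v) fun j ↦ by
      cases j with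
      | none => simpa [b, u, v, Matrix.vecMulVec_apply, Pi.single_apply] using hm
      | some i => simpa [b, u, v, Matrix.vecMulVec_apply, Pi.single_apply] using hc (x i)
  refine ⟨A.charpoly, n, A.charpoly_monic, aeval_charpoly_eq_zero_of_represents hb hA, ?_⟩
  have map_vecMulVec : (Matrix.vecMulVec u v).map (Ideal.Quotient.mk J) =
      .vecMulVec (Ideal.Quotient.mk J ∘ u) (Ideal.Quotient.mk J ∘ v) := by
    ext i j
    simp [Matrix.vecMulVec_apply]
  have dotProduct_eq : (Ideal.Quotient.mk J ∘ u) ⬝ᵥ (Ideal.Quotient.mk J ∘ v) = 1 := by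
    rw [← RingHom.map_dotProduct]
    simp [u, v]
  rw [← Matrix.charpoly_map, hAJ, map_vecMulVec, Matrix.charpoly_vecMulVec, dotProduct_eq]
  simp

theorem exists_eval_eq_one_aeval_mul_aeval_eq_smul {U : Type*} [CommRing U] [Algebra R U]
    {F : R[X]} {η : U} {θ : R} (hη : aeval η F = 0) (hθ : F.IsRoot θ)
    (hθ' : IsUnit (F.derivative.eval θ)) :
    ∃ G : R[X], G.eval θ = 1 ∧ ∀ H : R[X], aeval η H * aeval η G = H.eval θ • aeval η G := by
  obtain ⟨G, rfl⟩ := dvd_iff_isRoot.mpr hθ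
  obtain ⟨v, hv⟩ := hθ'.exists_left_inv
  refine ⟨C v * G, by simpa using hv, fun H ↦ ?_⟩
  obtain ⟨Q, hQ⟩ := X_sub_C_dvd_sub_C_eval (a := θ) (p := H)
  have aeval_H : aeval η H - algebraMap R U (H.eval θ) = aeval η (X - C θ) * aeval η Q := by
    simpa using congr(aeval η $hQ)
  rw [map_mul] at hη ⊢
  rw [Algebra.smul_def]
  linear_combination aeval η (C v) * aeval η G * aeval_H + aeval η (C v) * aeval η Q * hη

theorem mk_eval_eq_eval_map (G : R[X]) (a : R) : Ideal.Quotient.mk J (G.eval a) =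
    (G.map (Ideal.Quotient.mk J)).eval (Ideal.Quotient.mk J a) := by
  rw [eval_map, eval₂_at_apply]

theorem exists_isRoot_of_map_eq [HenselianRing R J] {F : R[X]} {n : ℕ} (hF : F.Monic)
    (hFJ : F.map (Ideal.Quotient.mk J) = X ^ (n + 1) - X ^ n) :
    ∃ θ, F.IsRoot θ ∧ IsUnit (F.derivative.eval θ) ∧ Ideal.Quotient.mk J θ = 1 := by
  have mk_derivative (θ : R) (hθ : Ideal.Quotient.mk J θ = 1) :
      Ideal.Quotient.mk J (F.derivative.eval θ) = 1 := by
    rw [mk_eval_eq_eval_map, ← derivative_map, hFJ, hθ]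
    simp [derivative_X_pow]
  obtain ⟨θ, hθ, hθ1⟩ := HenselianRing.is_henselian (I := J) F hF 1
    (by rw [← Ideal.Quotient.eq_zero_iff_mem, mk_eval_eq_eval_map, hFJ]; simp)
    (by rw [mk_derivative 1 (map_one _)]; exact isUnit_one)
  have mk_θ : Ideal.Quotient.mk J θ = 1 := (Ideal.Quotient.eq.mpr hθ1).trans (map_one _)
  exact ⟨θ, hθ, isUnit_of_isUnit_quotientMk (HenselianRing.jac (I := J))
    (by rw [mk_derivative θ mk_θ]; exact isUnit_one), mk_θ⟩

variable {U : Type*} [CommRing U] [Algebra R U] [Module.Finite R U]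

theorem mul_mem_span_of_mul_sub_smul_mem_map (hJ : J ≤ Ideal.jacobson ⊥) {η ε : U} {θ : R}
    (hθ : IsUnit θ) (hε : η * ε = θ • ε)
    (hη : ∀ u, ∃ c : R, η * u - c • η ∈ J.map (algebraMap R U)) (u : U) :
    ε * u ∈ Submodule.span R {ε} := by
  let εU : Submodule R U := LinearMap.range (LinearMap.mulLeft R ε)
  have εU_fg : εU.FG := Submodule.fg_range _
  suffices εU ≤ Submodule.span R {ε} from this (LinearMap.mem_range_self _ u)
  refine Submodule.le_of_le_smul_of_le_jacobson_bot εU_fg hJ ?_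
  rintro _ ⟨u, rfl⟩
  obtain ⟨c, hc⟩ := hη u
  have mul_mem : ε * (η * u - c • η) ∈ J • εU := by
    have : η * u - c • η ∈ J • (⊤ : Submodule R U) := by rwa [Ideal.smul_top_eq_map]
    have := Submodule.mem_map_of_mem (f := LinearMap.mulLeft R ε) this
    rwa [Submodule.map_smul'', Submodule.map_top] at this
  obtain ⟨w, hw⟩ := hθ.exists_left_inv
  have eq : ε * u = c • ε + w • (ε * (η * u - c • η)) := by
    have hw' := congr(algebraMap R U $hw)
    rw [map_mul, map_one] at hw'
    simp only [Algebra.smul_def] at hε ⊢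
    linear_combination (algebraMap R U c * ε - ε * u) * hw' +
      algebraMap R U w * (algebraMap R U c - u) * hε
  rw [LinearMap.mulLeft_apply, eq]
  exact Submodule.add_mem_sup (Submodule.smul_mem _ _ (Submodule.mem_span_singleton_self _))
    (Submodule.smul_mem _ _ mul_mem)

theorem exists_isIdempotentElem_mul_mem_span [HenselianRing R J] {η : U} (s : U →ₐ[R] R ⧸ J)
    (hsη : s η = 1)
    (hη : ∀ u c, s u = Ideal.Quotient.mk J c → η * u - c • η ∈ J.map (algebraMap R U)) :
    ∃ ε : U, IsIdempotentElem ε ∧ s ε = 1 ∧ ∀ u, ε * u ∈ Submodule.span R {ε} := by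
  have hη' (u : U) : ∃ c : R, η * u - c • η ∈ J.map (algebraMap R U) := by
    obtain ⟨c, hc⟩ := Ideal.Quotient.mk_surjective (s u)
    exact ⟨c, hη u c hc.symm⟩
  have jac : J ≤ Ideal.jacobson ⊥ := HenselianRing.jac
  obtain ⟨F, n, monic, aeval_mul, hFJ⟩ := exists_monic_aeval_eq_zero_map_eq (J := J)
    (Algebra.lmul R U η) η (by rw [Ideal.smul_top_eq_map]; simpa using hη η 1 (by simp [hsη]))
    (by rw [Ideal.smul_top_eq_map]; exact hη')
  have aeval_η : aeval η F = 0 := by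
    rw [aeval_algHom_apply] at aeval_mul
    simpa using congr($aeval_mul 1)
  obtain ⟨θ, hθ, hθ', mk_θ⟩ := exists_isRoot_of_map_eq monic hFJ
  obtain ⟨G, hGθ, hG⟩ := exists_eval_eq_one_aeval_mul_aeval_eq_smul aeval_η hθ hθ'
  refine ⟨aeval η G, by rw [IsIdempotentElem, hG, hGθ, one_smul], ?_,
    mul_mem_span_of_mul_sub_smul_mem_map jac
      (isUnit_of_isUnit_quotientMk jac (mk_θ ▸ isUnit_one)) (by simpa using hG X) hη'⟩
  calc s (aeval η G)
      = aeval (algebraMap R (R ⧸ J) θ) G := by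
        rw [← aeval_algHom_apply, hsη, Ideal.Quotient.algebraMap_eq, mk_θ]
    _ = algebraMap R (R ⧸ J) (G.eval θ) := by rw [aeval_algebraMap_apply, coe_aeval_eq_eval]
    _ = 1 := by rw [hGθ, map_one]

end SimpleRoot

section Henselian

variable {R : Type*} [CommRing R] {J : Ideal R}

theorem bijective_algebraMap_of_formallyEtale {W : Type*} [CommRing W] [Algebra R W]
    [Algebra.FormallyEtale R W] [Algebra.FinitePresentation R W] (hJ : J ≤ Ideal.jacobson ⊥)
    (surj : Function.Surjective (algebraMap R W)) (ker_le : RingHom.ker (algebraMap R W) ≤ J) :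
    Function.Bijective (algebraMap R W) := by
  have idem := (Algebra.FormallyEtale.iff_of_surjective surj).mp ‹Algebra.FormallyEtale R W›
  have fg := Algebra.FinitePresentation.ker_fG_of_surjective (Algebra.ofId R W) surj
  exact ⟨(RingHom.injective_iff_ker_eq_bot _).mpr <|
    Submodule.eq_bot_of_le_smul_of_le_jacobson_bot _ _ fg idem.eq.ge (ker_le.trans hJ), surj⟩

theorem formallyEtale_quotient_span_one_sub {U : Type*} [CommRing U] {ε : U}
    (hε : IsIdempotentElem ε) : Algebra.FormallyEtale U (U ⧸ Ideal.span {1 - ε}) := by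
  refine (Algebra.FormallyEtale.iff_of_surjective Ideal.Quotient.mk_surjective).mpr ?_
  rw [Ideal.Quotient.algebraMap_eq, Ideal.mk_ker, IsIdempotentElem,
    Ideal.span_singleton_mul_span_singleton, hε.one_sub.eq]

theorem exists_algHom_lift [HenselianRing R J] {U : Type*} [CommRing U] [Algebra R U]
    [Module.Finite R U] [Algebra.FinitePresentation R U] {r : U}
    [Algebra.FormallyEtale R (Localization.Away r)] (s : U →ₐ[R] R ⧸ J) (hr : IsUnit (s r)) :
    ∃ σ : U →ₐ[R] R, (Ideal.Quotient.mkₐ R J).comp σ = s := by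
  have jac : J ≤ Ideal.jacobson ⊥ := HenselianRing.jac
  obtain ⟨η, hsη, hη⟩ := exists_mul_sub_smul_mem_map s hr
  obtain ⟨ε, hε, hsε, hεU⟩ := exists_isIdempotentElem_mul_mem_span s hsη hη
  let L : Ideal U := Ideal.span {1 - ε}
  have L_le : L ≤ RingHom.ker s := (Ideal.span_singleton_le_iff_mem _).mpr (by simp [hsε])
  let sL : U ⧸ L →ₐ[R] R ⧸ J := Ideal.Quotient.liftₐ L s fun u hu ↦ L_le hu
  have surj : Function.Surjective (algebraMap R (U ⧸ L)) := fun w ↦ by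
    obtain ⟨u, rfl⟩ := Ideal.Quotient.mk_surjective w
    obtain ⟨c, hc⟩ := Submodule.mem_span_singleton.mp (hεU u)
    refine ⟨c, Ideal.Quotient.eq.mpr (Ideal.mem_span_singleton'.mpr ⟨algebraMap R U c - u, ?_⟩)⟩
    rw [Algebra.smul_def] at hc
    linear_combination -hc
  have ker_le : RingHom.ker (algebraMap R (U ⧸ L)) ≤ J := fun a ha ↦ by
    rw [← Ideal.Quotient.eq_zero_iff_mem]
    exact (sL.commutes a).symm.trans (by rw [RingHom.mem_ker.mp ha, map_zero])
  have isUnit_r : IsUnit (algebraMap U (U ⧸ L) r) := by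
    obtain ⟨c, hc⟩ := surj (algebraMap U (U ⧸ L) r)
    rw [← hc]
    refine (isUnit_of_isUnit_quotientMk jac ?_).map _
    rw [← Ideal.Quotient.algebraMap_eq, ← sL.commutes, hc]
    exact hr
  have := formallyEtale_quotient_span_one_sub hε
  have : Algebra.FormallyEtale R (U ⧸ L) := formallyEtale_of_formallyEtale_away R isUnit_r
  have : Algebra.FinitePresentation R (U ⧸ L) := .quotient (Submodule.fg_span_singleton _)
  let e : R ≃ₐ[R] U ⧸ L :=
    AlgEquiv.ofBijective (Algebra.ofId R _) (bijective_algebraMap_of_formallyEtale jac surj ker_le)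
  refine ⟨e.symm.toAlgHom.comp (Ideal.Quotient.mkₐ R L), AlgHom.ext fun u ↦ ?_⟩
  exact (sL.commutes _).symm.trans congr(sL $(e.apply_symm_apply (Ideal.Quotient.mk L u)))

theorem exists_isCoprime_mul_eq_of_map_eq_mul [HenselianRing R J] {m k : ℕ}
    (p : MonicDegreeEq R (m + k)) (g₀ : MonicDegreeEq (R ⧸ J) m) (h₀ : MonicDegreeEq (R ⧸ J) k)
    (hmul : g₀.1 * h₀.1 = p.1.map (Ideal.Quotient.mk J)) (hcop : IsCoprime g₀.1 h₀.1) :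
    ∃ g h : R[X], g * h = p.1 ∧ IsCoprime g h ∧ g.map (Ideal.Quotient.mk J) = g₀.1 ∧
      h.map (Ideal.Quotient.mk J) = h₀.1 := by
  let Δ := (UniversalFactorizationRing.presentation m k rfl p).jacobian
  have : Algebra.Etale R (Localization.Away Δ) :=
    inferInstanceAs (Algebra.Etale R (UniversalCoprimeFactorizationRing m k rfl p))
  let s' := (UniversalCoprimeFactorizationRing.homEquiv (R ⧸ J) m k rfl p).symm
    ⟨(g₀, h₀), hmul, hcop⟩
  let s : UniversalFactorizationRing m k rfl p →ₐ[R] R ⧸ J :=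
    s'.comp (IsScalarTower.toAlgHom R _ _)
  have isUnit_sΔ : IsUnit (s Δ) := (IsLocalization.Away.algebraMap_isUnit Δ).map s'
  obtain ⟨σ, hσ⟩ := exists_algHom_lift s isUnit_sΔ
  have isUnit_σΔ : IsUnit (σ Δ) :=
    isUnit_of_isUnit_quotientMk HenselianRing.jac (congr($hσ Δ) ▸ isUnit_sΔ)
  let σ' : UniversalCoprimeFactorizationRing m k rfl p →ₐ[R] R :=
    IsLocalization.Away.liftAlgHom Δ isUnit_σΔ
  have mk_comp_σ' : (Ideal.Quotient.mkₐ R J).comp σ' = s' := by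
    refine IsLocalization.algHom_ext (Submonoid.powers Δ) (AlgHom.ext fun u ↦ ?_)
    have σ'_algebraMap : σ' (algebraMap _ _ u) = σ u := IsLocalization.Away.lift_eq Δ isUnit_σΔ u
    exact congr(Ideal.Quotient.mk J $σ'_algebraMap).trans congr($hσ u)
  let q := UniversalCoprimeFactorizationRing.homEquiv R m k rfl p σ'
  have hs' : UniversalCoprimeFactorizationRing.homEquiv (R ⧸ J) m k rfl p s' =
    ⟨(g₀, h₀), hmul, hcop⟩ := Equiv.apply_symm_apply _ _
  have map_fst := UniversalCoprimeFactorizationRing.homEquiv_comp_fst R m k rfl p σ'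
    (Ideal.Quotient.mkₐ R J)
  have map_snd := UniversalCoprimeFactorizationRing.homEquiv_comp_snd R m k rfl p σ'
    (Ideal.Quotient.mkₐ R J)
  rw [mk_comp_σ', hs'] at map_fst map_snd
  exact ⟨q.1.1.1, q.1.2.1, q.2.1.trans map_id, q.2.2, congr(($map_fst).1).symm,
    congr(($map_snd).1).symm⟩

theorem map_charpoly_eq_X_pow {n : Type*} [Fintype n] [DecidableEq n] {d : Matrix n n R}
    (hd : ∀ i j, d i j ∈ J) :
    d.charpoly.map (Ideal.Quotient.mk J) = X ^ d.charpoly.natDegree := by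
  nontriviality R
  have map_d : d.map (Ideal.Quotient.mk J) = 0 := by
    ext i j
    exact Ideal.Quotient.eq_zero_iff_mem.mpr (hd i j)
  rw [Matrix.charpoly_natDegree_eq_dim, ← Matrix.charpoly_map, map_d, Matrix.charpoly_zero]

theorem eval_mem_of_dvd_of_map_eq_sub_pow {F g : R[X]} {a : R} {n : ℕ} (hn : n ≠ 0)
    (hg : g.map (Ideal.Quotient.mk J) = (X - C (Ideal.Quotient.mk J a)) ^ n) (hF : g ∣ F) :
    F.eval a ∈ J := by
  refine J.mem_of_dvd (eval_dvd hF) ?_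
  rw [← Ideal.Quotient.eq_zero_iff_mem, mk_eval_eq_eval_map, hg]
  simp [hn]

theorem exists_isCoprime_mul_eq_comp [Nontrivial R] [HenselianRing R J] {p : R[X]} (hp : p.Monic)
    (hpJ : p.map (Ideal.Quotient.mk J) = X ^ p.natDegree) :
    ∃ g h : R[X], g * h = p.comp (X ^ 2 - X) ∧ IsCoprime g h ∧
      g.map (Ideal.Quotient.mk J) = X ^ p.natDegree ∧
      h.map (Ideal.Quotient.mk J) = (X - 1) ^ p.natDegree := by
  have : Nontrivial (R ⧸ J) := Ideal.Quotient.nontrivial_iff.mpr <| by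
    rintro rfl
    exact bot_ne_top (Ideal.jacobson_eq_top_iff.mp (top_le_iff.mp (HenselianRing.jac (R := R))))
  have natDegree_X_sq_sub_X : (X ^ 2 - X : R[X]).natDegree = 2 := by compute_degree!
  have X_sq_sub_X_monic : (X ^ 2 - X : R[X]).Monic := by monicity!
  have comp_monic : (p.comp (X ^ 2 - X)).Monic :=
    hp.comp X_sq_sub_X_monic (by simp [natDegree_X_sq_sub_X])
  have natDegree_comp : (p.comp (X ^ 2 - X)).natDegree = p.natDegree + p.natDegree := by
    rw [natDegree_comp_eq_of_mul_ne_zero, natDegree_X_sq_sub_X, mul_two]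
    simp [X_sq_sub_X_monic.leadingCoeff, hp.leadingCoeff]
  have natDegree_X_sub_one_pow : ((X - 1 : (R ⧸ J)[X]) ^ p.natDegree).natDegree = p.natDegree := by
    rw [← C_1, (monic_X_sub_C _).natDegree_pow, natDegree_X_sub_C, mul_one]
  refine exists_isCoprime_mul_eq_of_map_eq_mul (.mk _ comp_monic natDegree_comp)
    (.mk (X ^ p.natDegree) (monic_X_pow _) (natDegree_X_pow _))
    (.mk ((X - 1) ^ p.natDegree) ((monic_X_sub_C 1).pow _) natDegree_X_sub_one_pow) ?_ ?_
  · change X ^ p.natDegree * (X - 1) ^ p.natDegree = (p.comp (X ^ 2 - X)).map _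
    rw [Polynomial.map_comp, hpJ, pow_comp, X_comp, ← mul_pow]
    simp only [Polynomial.map_sub, Polynomial.map_pow, map_X]
    ring
  · exact IsCoprime.pow ⟨1, -1, by ring⟩

theorem exists_comp_dvd_sq_sub_self [HenselianRing R J] {p : R[X]} (hp : p.Monic)
    (hpJ : p.map (Ideal.Quotient.mk J) = X ^ p.natDegree) :
    ∃ F : R[X], F.eval 0 ∈ J ∧ F.eval 1 - 1 ∈ J ∧ p.comp (X ^ 2 - X) ∣ F ^ 2 - F := by
  nontriviality R
  rcases eq_or_ne p.natDegree 0 with degree_eq | degree_ne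
  · refine ⟨X, by simp, by simp, ?_⟩
    simp [hp.natDegree_eq_zero.mp degree_eq]
  obtain ⟨g, h, hgh, ⟨u, v, huv⟩, hg, hh⟩ := exists_isCoprime_mul_eq_comp hp hpJ
  have ug_sub_one : u * g - 1 = h * -v := by linear_combination huv
  refine ⟨u * g, ?_, ?_, -(u * v), ?_⟩
  · exact eval_mem_of_dvd_of_map_eq_sub_pow degree_ne (by simpa using hg) (dvd_mul_left g u)
  · have := eval_mem_of_dvd_of_map_eq_sub_pow (a := 1) degree_ne (by simpa using hh)
      (Dvd.intro _ ug_sub_one.symm)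
    simpa using this
  · rw [← hgh]
    linear_combination u * g * huv

end Henselian

section IdempotentStable

variable {R Λ : Type*} [CommRing R] [Ring Λ] [Algebra R Λ]

/-- The elements `y` such that `y`, `E * y`, `y * E` and `E * y * E` lie in `M`. For an idempotent
`E` this is the largest part of `M` on which `E` acts from both sides, and it is open if `M` is. -/
def idempotentCore (M : NonUnitalSubalgebra R Λ) (E : Λ) : NonUnitalSubalgebra R Λ where
  carrier := {y | y ∈ M ∧ E * y ∈ M ∧ y * E ∈ M ∧ E * y * E ∈ M}
  zero_mem' := by simp
  add_mem' := by
    rintro x y ⟨hx, hEx, hxE, hExE⟩ ⟨hy, hEy, hyE, hEyE⟩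
    simp only [Set.mem_ofPred_eq, mul_add, add_mul]
    exact ⟨add_mem hx hy, add_mem hEx hEy, add_mem hxE hyE, add_mem hExE hEyE⟩
  mul_mem' := by
    rintro x y ⟨hx, hEx, -, -⟩ ⟨hy, -, hyE, -⟩
    simp only [Set.mem_ofPred_eq, mul_assoc] at hEx hyE ⊢
    exact ⟨mul_mem hx hy, by simpa only [mul_assoc] using mul_mem hEx hy, mul_mem hx hyE,
      by simpa only [mul_assoc] using mul_mem hEx hyE⟩
  smul_mem' := by
    rintro r y ⟨hy, hEy, hyE, hEyE⟩
    simp only [Set.mem_ofPred_eq, mul_smul_comm, smul_mul_assoc]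
    exact ⟨M.smul_mem r hy, M.smul_mem r hEy, M.smul_mem r hyE, M.smul_mem r hEyE⟩

variable {M : NonUnitalSubalgebra R Λ} {E : Λ}

theorem isOpen_idempotentCore [TopologicalSpace Λ] [IsTopologicalRing Λ]
    (hM : IsOpen (M : Set Λ)) : IsOpen (idempotentCore M E : Set Λ) :=
  hM.inter <| (hM.preimage (continuous_const_mul E)).inter <|
    (hM.preimage (continuous_mul_const E)).inter <|
      hM.preimage ((continuous_const_mul E).mul continuous_const)

theorem mul_mem_idempotentCore_left (hE : IsIdempotentElem E) {y : Λ}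
    (hy : y ∈ idempotentCore M E) : E * y ∈ idempotentCore M E := by
  obtain ⟨-, hEy, -, hEyE⟩ := hy
  refine ⟨hEy, ?_, hEyE, ?_⟩
  · rwa [← mul_assoc, hE.eq]
  · rwa [← mul_assoc, hE.eq]

theorem mul_mem_idempotentCore_right (hE : IsIdempotentElem E) {y : Λ}
    (hy : y ∈ idempotentCore M E) : y * E ∈ idempotentCore M E := by
  obtain ⟨-, -, hyE, hEyE⟩ := hy
  refine ⟨hyE, ?_, ?_, ?_⟩
  · rwa [← mul_assoc]
  · rwa [mul_assoc, hE.eq]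
  · rwa [mul_assoc, mul_assoc, hE.eq, ← mul_assoc]

theorem pow_sub_pow_mem_idempotentCore (hE : IsIdempotentElem E) {x : Λ}
    (hx : x - E ∈ idempotentCore M E) (k : ℕ) : x ^ k - E ^ k ∈ idempotentCore M E := by
  induction k with
  | zero => simp [zero_mem]
  | succ k ih =>
    have step : x ^ (k + 1) - E ^ (k + 1) =
        (x ^ k - E ^ k) * E + (x ^ k - E ^ k) * (x - E) + E ^ k * (x - E) := by
      noncomm_ring
    have pow_mul_mem : E ^ k * (x - E) ∈ idempotentCore M E := by
      rcases k with _ | k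
      · simpa using hx
      · rw [hE.pow_succ_eq]
        exact mul_mem_idempotentCore_left hE hx
    rw [step]
    exact add_mem (add_mem (mul_mem_idempotentCore_right hE ih) (mul_mem ih hx)) pow_mul_mem

theorem aeval_sub_aeval_mem_idempotentCore (hE : IsIdempotentElem E) {x : Λ}
    (hx : x - E ∈ idempotentCore M E) (F : R[X]) :
    aeval x F - aeval E F ∈ idempotentCore M E := by
  rw [aeval_eq_sum_range, aeval_eq_sum_range, ← Finset.sum_sub_distrib]
  refine sum_mem fun k _ ↦ ?_
  rw [← smul_sub]
  exact SMulMemClass.smul_mem _ (pow_sub_pow_mem_idempotentCore hE hx k)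

theorem aeval_eq_of_isIdempotentElem (hE : IsIdempotentElem E) (F : R[X]) :
    aeval E F = F.eval 0 • (1 - E) + F.eval 1 • E := by
  induction F using Polynomial.induction_on' with
  | add p q hp hq => rw [map_add, hp, hq, eval_add, eval_add]; module
  | monomial k a =>
    rcases k with _ | k
    · simp only [aeval_monomial, pow_zero, mul_one, eval_monomial, Algebra.algebraMap_eq_smul_one]
      module
    · simp [aeval_monomial, hE.pow_succ_eq, Algebra.smul_def]

theorem isUnit_of_sub_mem_idempotentCore (hM : ∀ y ∈ M, IsUnit (1 + y))
    (hE : IsIdempotentElem E) {a c : R} (ha : IsUnit a) (hc : IsUnit c) {u : Λ}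
    (hu : u - (a • (1 - E) + c • E) ∈ idempotentCore M E) : IsUnit u := by
  obtain ⟨a, rfl⟩ := ha
  obtain ⟨c, rfl⟩ := hc
  have mul_eq_one (a a' c c' : R) (haa' : a * a' = 1) (hcc' : c * c' = 1) :
      (a • (1 - E) + c • E) * (a' • (1 - E) + c' • E) = 1 := by
    simp only [add_mul, mul_add, smul_mul_smul_comm, haa', hcc', hE.one_sub.eq, hE.eq,
      hE.one_sub_mul_self, hE.mul_one_sub_self]
    module
  let w : Λˣ :=
    ⟨(a : R) • (1 - E) + (c : R) • E, (↑a⁻¹ : R) • (1 - E) + (↑c⁻¹ : R) • E,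
      mul_eq_one _ _ _ _ a.mul_inv c.mul_inv, mul_eq_one _ _ _ _ a.inv_mul c.inv_mul⟩
  have inv_mul_mem {y : Λ} (hy : y ∈ idempotentCore M E) : ↑w⁻¹ * y ∈ idempotentCore M E := by
    change ((↑a⁻¹ : R) • (1 - E) + (↑c⁻¹ : R) • E) * y ∈ _
    have hEy := mul_mem_idempotentCore_left hE hy
    rw [add_mul, smul_mul_assoc, smul_mul_assoc, sub_mul, one_mul]
    exact add_mem (SMulMemClass.smul_mem _ (sub_mem hy hEy)) (SMulMemClass.smul_mem _ hEy)
  have u_eq : u = w * (1 + ↑w⁻¹ * (u - w)) := by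
    rw [mul_add, mul_one, Units.mul_inv_cancel_left, add_sub_cancel]
  rw [u_eq]
  exact w.isUnit.mul (hM _ (inv_mul_mem hu).1)

theorem exists_isUnit_aeval_mul_eq_mul (hM : ∀ y ∈ M, IsUnit (1 + y))
    (hE : IsIdempotentElem E) {J : Ideal R} (hJ : J ≤ Ideal.jacobson ⊥) {F : R[X]}
    (hF₀ : F.eval 0 ∈ J) (hF₁ : F.eval 1 - 1 ∈ J) {x : Λ} (hx : x - E ∈ idempotentCore M E)
    (hxF : IsIdempotentElem (aeval x F)) : ∃ u, IsUnit u ∧ aeval x F * u = u * E := by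
  set e := aeval x F
  have isUnit_one_sub_eval_zero : IsUnit (1 - F.eval 0) := by
    simpa [sub_eq_add_neg] using isUnit_one_add_of_mem hJ (neg_mem hF₀)
  have isUnit_eval_one : IsUnit (F.eval 1) := by simpa using isUnit_one_add_of_mem hJ hF₁
  refine ⟨e * E + (1 - e) * (1 - E), isUnit_of_sub_mem_idempotentCore hM hE
    isUnit_one_sub_eval_zero isUnit_eval_one ?_, ?_⟩
  · have sub_eq : e * E + (1 - e) * (1 - E) - ((1 - F.eval 0) • (1 - E) + F.eval 1 • E) =
        2 • ((e - aeval E F) * E) - (e - aeval E F) := by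
      rw [aeval_eq_of_isIdempotentElem hE]
      simp only [sub_mul, add_mul, mul_sub, smul_mul_assoc, hE.eq, one_mul, mul_one]
      module
    have mem := aeval_sub_aeval_mem_idempotentCore hE hx F
    rw [sub_eq]
    exact sub_mem (nsmul_mem (mul_mem_idempotentCore_right hE mem) 2) mem
  · rw [mul_add, ← mul_assoc, ← mul_assoc, hxF.eq, hxF.mul_one_sub_self, zero_mul, add_zero,
      add_mul, mul_assoc, mul_assoc, hE.eq, hE.one_sub_mul_self, mul_zero, add_zero]

end IdempotentStable

section MatrixSubalgebra

variable {R B : Type*} [CommRing R] [CommRing B] [Algebra R B]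
  (n : Type*) [Fintype n]

/-- The square matrices with entries in `U`. -/
def matrixNonUnitalSubalgebra (U : NonUnitalSubalgebra R B) :
    NonUnitalSubalgebra R (Matrix n n B) where
  carrier := (U : Set B).matrix
  zero_mem' _ _ := U.zero_mem
  add_mem' hX hY i j := U.add_mem (hX i j) (hY i j)
  mul_mem' hX hY i j := sum_mem fun k _ ↦ U.mul_mem (hX i k) (hY k j)
  smul_mem' r _ hX i j := U.smul_mem r (hX i j)

variable {n} {U : NonUnitalSubalgebra R B}

theorem isUnit_one_add_of_mem_matrixNonUnitalSubalgebra [DecidableEq n]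
    (hU : ∀ u ∈ U, IsUnit (1 + u)) {D : Matrix n n B} (hD : D ∈ matrixNonUnitalSubalgebra n U) :
    IsUnit (1 + D) := by
  let D' : Matrix n n (Unitization R U) := .of fun i j ↦ .inr ⟨D i j, hD i j⟩
  have map_D' : (NonUnitalSubalgebra.unitization U).mapMatrix (1 + D') = 1 + D := by
    rw [map_add, map_one]
    ext i j
    simp [D', Matrix.add_apply]
  have fst_det : (1 + D').det.fst = 1 := by
    change Unitization.fstHom R U (1 + D').det = 1
    rw [AlgHom.map_det, map_add, map_one]
    have : (Unitization.fstHom R U).mapMatrix D' = 0 := by ext; simp [D']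
    rw [this, add_zero, Matrix.det_one]
  rw [Matrix.isUnit_iff_isUnit_det, ← map_D', ← AlgHom.map_det,
    NonUnitalSubalgebra.unitization_apply, fst_det, map_one]
  exact hU _ (1 + D').det.snd.2

end MatrixSubalgebra

theorem exists_isIdempotentElem_aeval {R A : Type*} [CommRing R] [CommRing A] [Algebra R A]
    {J : Ideal R} [HenselianRing R J] {n : Type*} [Fintype n] [DecidableEq n] {E₀ : Matrix n n A}
    (hE₀ : ∀ i j, ∃ r ∈ J, algebraMap R A r = (E₀ ^ 2 - E₀) i j) :
    ∃ F : R[X], F.eval 0 ∈ J ∧ F.eval 1 - 1 ∈ J ∧ IsIdempotentElem (aeval E₀ F) := by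
  choose d hdJ d_eq using hE₀
  have map_d : (Matrix.of d).map (algebraMap R A) = E₀ ^ 2 - E₀ := Matrix.ext d_eq
  obtain ⟨F, hF₀, hF₁, charpoly_dvd⟩ :=
    exists_comp_dvd_sq_sub_self (Matrix.charpoly_monic _) (map_charpoly_eq_X_pow hdJ)
  have aeval_charpoly : aeval E₀ ((Matrix.of d).charpoly.comp (X ^ 2 - X)) = 0 := by
    rw [aeval_comp, map_sub, map_pow, aeval_X, ← map_d, ← aeval_map_algebraMap A,
      ← Matrix.charpoly_map, Matrix.aeval_self_charpoly]
  have aeval_sq_sub : aeval E₀ (F ^ 2 - F) = 0 :=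
    zero_dvd_iff.mp (aeval_charpoly ▸ map_dvd (aeval E₀) charpoly_dvd)
  rw [map_sub, map_pow, sub_eq_zero, sq] at aeval_sq_sub
  exact ⟨F, hF₀, hF₁, aeval_sq_sub⟩

section Approximation

variable {R A B : Type*} [CommRing R] [CommRing A] [CommRing B] [Algebra R A] [Algebra A B]
  [Algebra R B] [TopologicalSpace B]

/-- `U` witnesses that `A → B` is a dense approximation controlled by the ideal `J` of `R`: it is an
open nonunital subalgebra of the topological ring `B`, close to zero in that `1 + U` consists of
units, and its elements coming from `A` come from `J`. -/
structure IsApproximation (A : Type*) [CommRing A] [Algebra R A] [Algebra A B] (J : Ideal R)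
    (U : NonUnitalSubalgebra R B) : Prop where
  denseRange_algebraMap : DenseRange (algebraMap A B)
  isOpen : IsOpen (U : Set B)
  isUnit_one_add : ∀ u ∈ U, IsUnit (1 + u)
  exists_algebraMap_eq : ∀ a : A, algebraMap A B a ∈ U → ∃ r ∈ J, algebraMap R A r = a

theorem denseRange_matrix_map {X Y : Type*} [TopologicalSpace Y] {f : X → Y} (hf : DenseRange f)
    (m n : Type*) : DenseRange fun M : Matrix m n X ↦ M.map f :=
  .piMap fun _ ↦ .piMap fun _ ↦ hf

namespace IsApproximation

variable {J : Ideal R} {U : NonUnitalSubalgebra R B}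

theorem isUnit_one_add_of_map_mem [IsScalarTower R A B] (h : IsApproximation A J U)
    (hJ : J ≤ Ideal.jacobson ⊥) {n : Type*} [Fintype n] [DecidableEq n] {D : Matrix n n A}
    (hD : D.map (algebraMap A B) ∈ matrixNonUnitalSubalgebra n U) : IsUnit (1 + D) := by
  refine isUnit_one_add_of_mem_matrixNonUnitalSubalgebra
    (U := U.comap (IsScalarTower.toAlgHom R A B)) (fun a ha ↦ ?_) hD
  obtain ⟨r, hr, rfl⟩ := h.exists_algebraMap_eq a ha
  simpa using (isUnit_one_add_of_mem hJ hr).map (algebraMap R A)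

theorem exists_isUnit_one_add [IsTopologicalRing B] [IsScalarTower R A B]
    (h : IsApproximation A J U)
    (hJ : J ≤ Ideal.jacobson ⊥) {m n : Type*} [Fintype m] [DecidableEq m] [Fintype n]
    [DecidableEq n] (f : Matrix m m A) (g : Matrix n n A) (X : Matrix n m B) (Y : Matrix m n B)
    (hf : f.map (algebraMap A B) * Y * g.map (algebraMap A B) * X * f.map (algebraMap A B) =
      f.map (algebraMap A B))
    (hg : g.map (algebraMap A B) * X * f.map (algebraMap A B) * Y * g.map (algebraMap A B) =
      g.map (algebraMap A B)) :
    ∃ (X₀ : Matrix n m A) (Y₀ : Matrix m n A),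
      IsUnit (1 + (f * Y₀ * g * X₀ * f - f)) ∧ IsUnit (1 + (g * X₀ * f * Y₀ * g - g)) := by
  set f' := f.map (algebraMap A B)
  set g' := g.map (algebraMap A B)
  have isOpen_f : IsOpen {Z : Matrix n m B × Matrix m n B |
      f' * Z.2 * g' * Z.1 * f' - f' ∈ matrixNonUnitalSubalgebra m U} :=
    h.isOpen.matrix.preimage (by fun_prop)
  have isOpen_g : IsOpen {Z : Matrix n m B × Matrix m n B |
      g' * Z.1 * f' * Z.2 * g' - g' ∈ matrixNonUnitalSubalgebra n U} :=
    h.isOpen.matrix.preimage (by fun_prop)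
  obtain ⟨⟨X₀, Y₀⟩, hX₀, hY₀⟩ := ((denseRange_matrix_map h.denseRange_algebraMap n m).prodMap
    (denseRange_matrix_map h.denseRange_algebraMap m n)).exists_mem_open
    (isOpen_f.inter isOpen_g) ⟨(X, Y), by simp [hf, zero_mem], by simp [hg, zero_mem]⟩
  refine ⟨X₀, Y₀, h.isUnit_one_add_of_map_mem hJ ?_, h.isUnit_one_add_of_map_mem hJ ?_⟩
  · simpa [Matrix.map_sub, Matrix.map_mul] using hX₀
  · simpa [Matrix.map_sub, Matrix.map_mul] using hY₀

theorem exists_isIdempotentElem_mul_eq_mul [IsTopologicalRing B] [IsScalarTower R A B]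
    [HenselianRing R J] (h : IsApproximation A J U) {n : Type*} [Fintype n] [DecidableEq n]
    {E : Matrix n n B} (hE : IsIdempotentElem E) :
    ∃ (e : Matrix n n A) (u : Matrix n n B), IsIdempotentElem e ∧ IsUnit u ∧
      e.map (algebraMap A B) * u = u * E := by
  let φ : Matrix n n A →ₐ[R] Matrix n n B := (IsScalarTower.toAlgHom R A B).mapMatrix
  have isOpen_N : IsOpen {Z | Z - E ∈ idempotentCore (matrixNonUnitalSubalgebra n U) E ∧
      Z ^ 2 - Z ∈ matrixNonUnitalSubalgebra n U} :=
    ((isOpen_idempotentCore h.isOpen.matrix).preimage (by fun_prop)).inter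
      (h.isOpen.matrix.preimage (by fun_prop))
  obtain ⟨E₀, E₀_sub_E_mem, sq_sub_mem⟩ :=
    (denseRange_matrix_map h.denseRange_algebraMap n n).exists_mem_open isOpen_N
      ⟨E, by simp [zero_mem], by simp [hE.pow_succ_eq 1, zero_mem]⟩
  have exists_entry (i j : n) : ∃ r ∈ J, algebraMap R A r = (E₀ ^ 2 - E₀) i j := by
    refine h.exists_algebraMap_eq _ ?_
    have φ_sq_sub : φ E₀ ^ 2 - φ E₀ = φ (E₀ ^ 2 - E₀) := by rw [map_sub, map_pow]
    exact congr($φ_sq_sub i j ∈ U).mp (sq_sub_mem i j)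
  obtain ⟨F, hF₀, hF₁, isIdempotentElem_aeval⟩ := exists_isIdempotentElem_aeval exists_entry
  have φ_aeval : φ (aeval E₀ F) = aeval (φ E₀) F := (aeval_algHom_apply φ E₀ F).symm
  obtain ⟨u, hu, eq⟩ := exists_isUnit_aeval_mul_eq_mul
    (fun _ ↦ isUnit_one_add_of_mem_matrixNonUnitalSubalgebra h.isUnit_one_add) hE
    HenselianRing.jac hF₀ hF₁ E₀_sub_E_mem (φ_aeval ▸ isIdempotentElem_aeval.map φ)
  exact ⟨aeval E₀ F, u, isIdempotentElem_aeval, hu, congr($φ_aeval * u).trans eq⟩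

end IsApproximation

end Approximation

open TensorProduct in
theorem exists_baseChange_splitting {A : Type*} [CommRing A] (B : Type*) [CommRing B] [Algebra A B]
    {P : Type*} [AddCommGroup P] [Module A P] {n : Type*} [Fintype n] [DecidableEq n]
    {i : P →ₗ[A] n → A} {p : (n → A) →ₗ[A] P} (hpi : ∀ x, p (i x) = x) :
    ∃ (iB : B ⊗[A] P →ₗ[B] n → B) (pB : (n → B) →ₗ[B] B ⊗[A] P), (∀ x, pB (iB x) = x) ∧
      (iB ∘ₗ pB).toMatrix' = (i ∘ₗ p).toMatrix'.map (algebraMap A B) := by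
  let σ := TensorProduct.piScalarRight A B B n
  have σ_symm_single (k : n) : σ.symm (Pi.single k 1) = 1 ⊗ₜ[A] Pi.single k 1 := by
    rw [LinearEquiv.symm_apply_eq]
    ext l
    simp [σ, Pi.single_apply]
  refine ⟨σ.toLinearMap ∘ₗ i.baseChange B, p.baseChange B ∘ₗ σ.symm.toLinearMap, fun x ↦ ?_, ?_⟩
  · induction x with
    | zero => simp
    | tmul b x => simp [hpi]
    | add x y hx hy => rw [map_add, map_add, hx, hy]
  · ext j k
    simp [LinearMap.toMatrix'_apply, σ_symm_single, σ, Algebra.smul_def]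

section Splitting

variable {A P F : Type*} [Ring A] [AddCommGroup P] [Module A P] [AddCommGroup F] [Module A F]
  {i : P →ₗ[A] F} {p : F →ₗ[A] P}

theorem isUnit_of_isUnit_one_add_comp (hpi : ∀ x, p (i x) = x) {g : Module.End A P}
    (hg : IsUnit (1 + i ∘ₗ (g - 1) ∘ₗ p : Module.End A F)) : IsUnit g := by
  obtain ⟨V, hWV, hVW⟩ := isUnit_iff_exists.mp hg
  refine isUnit_iff_exists.mpr ⟨p ∘ₗ V ∘ₗ i, LinearMap.ext fun x ↦ ?_, LinearMap.ext fun x ↦ ?_⟩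
  · simpa [hpi] using congr(p ($hWV (i x)))
  · simpa [hpi] using congr(p ($hVW (i x)))

variable {Q : Type*} [AddCommGroup Q] [Module A Q] {j : Q →ₗ[A] F} {q : F →ₗ[A] Q}

theorem nonempty_linearEquiv_of_conj (hpi : ∀ x, p (i x) = x) (hqj : ∀ y, q (j y) = y)
    (u : F ≃ₗ[A] F) (hu : ∀ z, i (p (u z)) = u (j (q z))) : Nonempty (P ≃ₗ[A] Q) := by
  have hu_symm (z : F) : j (q (u.symm z)) = u.symm (i (p z)) := by
    rw [LinearEquiv.eq_symm_apply, ← hu, LinearEquiv.apply_symm_apply]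
  refine ⟨.ofLinearMap (q ∘ₗ u.symm.toLinearMap ∘ₗ i) (p ∘ₗ u.toLinearMap ∘ₗ j) ?_ ?_⟩
  · ext x
    simp [hu, hqj]
  · ext x
    simp [hu_symm, hpi]

end Splitting

theorem isUnit_comp_of_isUnit_one_add {A P P' : Type*} [CommRing A] [AddCommGroup P] [Module A P]
    [AddCommGroup P'] [Module A P'] {n m : Type*} [Fintype n] [DecidableEq n] [Fintype m]
    [DecidableEq m] {i : P →ₗ[A] n → A} {p : (n → A) →ₗ[A] P} {i' : P' →ₗ[A] m → A}
    {p' : (m → A) →ₗ[A] P'} (hpi : ∀ x, p (i x) = x) {X : Matrix m n A} {Y : Matrix n m A}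
    (h : IsUnit (1 + ((i ∘ₗ p).toMatrix' * Y * (i' ∘ₗ p').toMatrix' * X * (i ∘ₗ p).toMatrix' -
      (i ∘ₗ p).toMatrix'))) :
    IsUnit ((p ∘ₗ Y.toLin' ∘ₗ i') ∘ₗ p' ∘ₗ X.toLin' ∘ₗ i : Module.End A P) := by
  refine isUnit_of_isUnit_one_add_comp hpi ?_
  convert h.map (Matrix.toLinAlgEquiv' (R := A))
  refine LinearMap.ext fun x ↦ ?_
  simp [← Matrix.mulVec_mulVec]

section ProjectiveModules

open TensorProduct

variable {R A B : Type*} [CommRing R] [CommRing A] [CommRing B] [Algebra R A] [Algebra A B]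
  [Algebra R B] [IsScalarTower R A B] [TopologicalSpace B] [IsTopologicalRing B]
  {J : Ideal R} {U : NonUnitalSubalgebra R B}

theorem IsApproximation.nonempty_linearEquiv (h : IsApproximation A J U)
    (hJ : J ≤ Ideal.jacobson ⊥) {P P' : Type*} [AddCommGroup P] [Module A P] [AddCommGroup P']
    [Module A P'] [Module.Finite A P] [Module.Projective A P] [Module.Finite A P']
    [Module.Projective A P'] (φ : B ⊗[A] P ≃ₗ[B] B ⊗[A] P') : Nonempty (P ≃ₗ[A] P') := by
  obtain ⟨n, p, i, -, -, hpi⟩ := Module.Finite.exists_comp_eq_id_of_projective A P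
  obtain ⟨m, p', i', -, -, hpi'⟩ := Module.Finite.exists_comp_eq_id_of_projective A P'
  replace hpi := LinearMap.congr_fun hpi
  replace hpi' := LinearMap.congr_fun hpi'
  simp only [LinearMap.comp_apply, LinearMap.id_apply] at hpi hpi'
  obtain ⟨iB, pB, hB, toMatrix_B⟩ := exists_baseChange_splitting B hpi
  obtain ⟨iB', pB', hB', toMatrix_B'⟩ := exists_baseChange_splitting B hpi'
  obtain ⟨X, Y, isUnit_P, isUnit_P'⟩ := h.exists_isUnit_one_add hJ
    (i ∘ₗ p).toMatrix' (i' ∘ₗ p').toMatrix' (iB' ∘ₗ φ.toLinearMap ∘ₗ pB).toMatrix'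
    (iB ∘ₗ φ.symm.toLinearMap ∘ₗ pB').toMatrix'
    (by
      simp only [← toMatrix_B, ← toMatrix_B', ← LinearMap.toMatrix'_comp]
      exact congrArg _ <| LinearMap.ext fun x ↦ by simp [hB, hB'])
    (by
      simp only [← toMatrix_B, ← toMatrix_B', ← LinearMap.toMatrix'_comp]
      exact congrArg _ <| LinearMap.ext fun x ↦ by simp [hB, hB'])
  let ψ : P →ₗ[A] P' := p' ∘ₗ X.toLin' ∘ₗ i
  let χ : P' →ₗ[A] P := p ∘ₗ Y.toLin' ∘ₗ i'
  have isUnit_χψ : IsUnit (χ ∘ₗ ψ : Module.End A P) := isUnit_comp_of_isUnit_one_add hpi isUnit_P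
  have isUnit_ψχ : IsUnit (ψ ∘ₗ χ : Module.End A P') :=
    isUnit_comp_of_isUnit_one_add hpi' isUnit_P'
  rw [Module.End.isUnit_iff, LinearMap.coe_comp] at isUnit_χψ isUnit_ψχ
  exact ⟨.ofBijective ψ ⟨isUnit_χψ.1.of_comp, isUnit_ψχ.2.of_comp⟩⟩

theorem IsApproximation.exists_projective_baseChange [HenselianRing R J]
    (h : IsApproximation A J U) (Q : Type*) [AddCommGroup Q] [Module B Q]
    [Module.Finite B Q] [Module.Projective B Q] :
    ∃ (n : ℕ) (P : Submodule A (Fin n → A)), Module.Finite A P ∧ Module.Projective A P ∧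
      Nonempty (B ⊗[A] P ≃ₗ[B] Q) := by
  obtain ⟨n, q, j, -, -, hqj⟩ := Module.Finite.exists_comp_eq_id_of_projective B Q
  replace hqj := LinearMap.congr_fun hqj
  simp only [LinearMap.comp_apply, LinearMap.id_apply] at hqj
  have isIdempotentElem_jq : IsIdempotentElem (j ∘ₗ q).toMatrix' := by
    rw [IsIdempotentElem, ← LinearMap.toMatrix'_comp]
    exact congrArg _ <| LinearMap.ext fun x ↦ by simp [hqj]
  obtain ⟨e, u, he, hu, heu⟩ := h.exists_isIdempotentElem_mul_eq_mul isIdempotentElem_jq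
  let ε := e.toLin'
  have rangeRestrict_subtype (x) : ε.rangeRestrict ((LinearMap.range ε).subtype x) = x := by
    obtain ⟨_, x, rfl⟩ := x
    simp [Subtype.ext_iff, ε, he.eq]
  obtain ⟨iB, pB, hB, toMatrix_B⟩ := exists_baseChange_splitting B rangeRestrict_subtype
  refine ⟨n, LinearMap.range ε, .of_surjective ε.rangeRestrict ε.surjective_rangeRestrict,
    .of_split (LinearMap.range ε).subtype ε.rangeRestrict (LinearMap.ext rangeRestrict_subtype),
    nonempty_linearEquiv_of_conj hB hqj (Matrix.toLinearEquiv' u hu.invertible) fun z ↦ ?_⟩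
  have toMatrix_ε : ((LinearMap.range ε).subtype ∘ₗ ε.rangeRestrict).toMatrix' = e :=
    LinearMap.toMatrix'_toLin' e
  rw [← toMatrix_ε, ← toMatrix_B] at heu
  change iB (pB (u.mulVec z)) = u.mulVec (j (q z))
  simpa [← Matrix.mulVec_mulVec] using congr(Matrix.mulVec $heu z)

end ProjectiveModules

section AwayTopology

variable {R S B : Type*} [CommRing R] [CommRing S] [CommRing B] [Algebra S B]

/-- The image of `τ ^ m • K` in an algebra `B`. If `B = S[τ⁻¹]`, these form a basis of neighborhoods
of zero for a ring topology on `B`. -/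
def awayFiltration (B : Type*) [CommRing B] [Algebra S B] (τ : S) (K : Ideal S) (m : ℕ) :
    Submodule S B :=
  Submodule.map (Algebra.linearMap S B) (Ideal.span {τ ^ m} * K)

variable {τ : S} {K : Ideal S}

theorem mem_awayFiltration {m : ℕ} {b : B} :
    b ∈ awayFiltration B τ K m ↔ ∃ y ∈ K, algebraMap S B (τ ^ m * y) = b := by
  simp [awayFiltration, Ideal.mem_span_singleton_mul]

theorem awayFiltration_antitone : Antitone (awayFiltration B τ K) := fun _ _ h ↦
  Submodule.map_mono <| Ideal.mul_mono_left <|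
    Ideal.span_singleton_le_span_singleton.mpr (pow_dvd_pow τ h)

theorem mul_mem_awayFiltration {m : ℕ} {b c : B} (hb : b ∈ awayFiltration B τ K m)
    (hc : c ∈ awayFiltration B τ K m) : b * c ∈ awayFiltration B τ K m := by
  obtain ⟨y, -, rfl⟩ := mem_awayFiltration.mp hb
  obtain ⟨z, hz, rfl⟩ := mem_awayFiltration.mp hc
  exact mem_awayFiltration.mpr
    ⟨y * τ ^ m * z, K.mul_mem_left _ hz, by rw [← map_mul]; congr 1; ring⟩

theorem submodulesRingBasis_awayFiltration [IsLocalization.Away τ B] :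
    SubmodulesRingBasis (awayFiltration B τ K) where
  inter i j := ⟨max i j, le_inf (awayFiltration_antitone (le_max_left i j))
    (awayFiltration_antitone (le_max_right i j))⟩
  leftMul b i := by
    obtain ⟨k, x, hx⟩ := IsLocalization.Away.surj τ b
    refine ⟨i + k, ?_⟩
    rintro _ ⟨c, hc, rfl⟩
    obtain ⟨y, hy, rfl⟩ := mem_awayFiltration.mp hc
    refine mem_awayFiltration.mpr ⟨x * y, K.mul_mem_left _ hy, ?_⟩
    simp only [map_mul, map_pow, ← hx, DistribSMul.toLinearMap_apply, smul_eq_mul]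
    ring
  mul i := ⟨i, by
    rintro _ ⟨b, hb, c, hc, rfl⟩
    exact mul_mem_awayFiltration hb hc⟩

variable [Algebra R S] [Algebra R B] [IsScalarTower R S B]

/-- The image `awayFiltration B τ K m` of `τ ^ m • K`, as a nonunital algebra over a base ring
`R`. -/
def awaySubalgebra (R B : Type*) [CommRing R] [CommRing B] [Algebra S B] [Algebra R S]
    [Algebra R B] [IsScalarTower R S B] (τ : S) (K : Ideal S) (m : ℕ) :
    NonUnitalSubalgebra R B where
  __ := (awayFiltration B τ K m).restrictScalars R
  mul_mem' := mul_mem_awayFiltration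

theorem isUnit_one_add_of_mem_awaySubalgebra (hK : K ≤ Ideal.jacobson ⊥) {m : ℕ} {b : B}
    (hb : b ∈ awaySubalgebra R B τ K m) : IsUnit (1 + b) := by
  obtain ⟨y, hy, rfl⟩ := mem_awayFiltration.mp hb
  simpa using (isUnit_one_add_of_mem hK (K.mul_mem_left (τ ^ m) hy)).map (algebraMap S B)

variable {A : Type*} [CommRing A] [Algebra R A] [Algebra A B] [IsScalarTower R A B] {t : R}
  [IsLocalization.Away t A]

theorem exists_algebraMap_sub_mem_awayFiltration [IsLocalization.Away (algebraMap R S t) B]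
    (hdense : ∀ (m : ℕ) (x : S),
      ∃ r : R, algebraMap R S r - x ∈ Ideal.span {algebraMap R S t ^ m} * K)
    (m : ℕ) (b : B) : ∃ a : A, algebraMap A B a - b ∈ awayFiltration B (algebraMap R S t) K m := by
  obtain ⟨k, x, hx⟩ := IsLocalization.Away.surj (algebraMap R S t) b
  obtain ⟨r, hr⟩ := hdense (m + k) x
  obtain ⟨y, hy, y_eq⟩ := Ideal.mem_span_singleton_mul.mp hr
  have isUnit_pow : IsUnit (algebraMap S B (algebraMap R S t) ^ k) :=
    (IsLocalization.Away.algebraMap_isUnit _).pow k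
  let a : A := IsLocalization.mk' A r (M := .powers t) ⟨t ^ k, k, rfl⟩
  have a_mul : algebraMap A B a * algebraMap S B (algebraMap R S t) ^ k =
      algebraMap S B (algebraMap R S r) := by
    simpa [← IsScalarTower.algebraMap_apply, a] using
      congr(algebraMap A B $(IsLocalization.mk'_spec A r (M := .powers t) ⟨t ^ k, k, rfl⟩))
  refine ⟨a, mem_awayFiltration.mpr ⟨y, hy, isUnit_pow.mul_right_cancel ?_⟩⟩
  rw [sub_mul, a_mul, hx, ← map_sub, ← y_eq]
  simp only [map_mul, map_pow]
  ring

theorem exists_algebraMap_eq_of_mem_awaySubalgebra {J : Ideal R}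
    (hinj : Function.Injective (algebraMap S B))
    (hcomap : ∀ (m : ℕ) (r : R),
      algebraMap R S r ∈ Ideal.span {algebraMap R S t ^ m} * K → r ∈ Ideal.span {t ^ m} * J)
    {a : A} (ha : algebraMap A B a ∈ awaySubalgebra R B (algebraMap R S t) K 0) :
    ∃ s ∈ J, algebraMap R A s = a := by
  obtain ⟨y, hy, y_eq⟩ := mem_awayFiltration.mp ha
  obtain ⟨l, r, hr⟩ := IsLocalization.Away.surj t a
  have r_eq : algebraMap R S t ^ l * y = algebraMap R S r := hinj <| by
    have := congr(algebraMap A B $hr)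
    simp only [map_mul, map_pow, ← y_eq, ← IsScalarTower.algebraMap_apply] at this ⊢
    simpa [mul_comm] using this
  obtain ⟨s, hs, rfl⟩ := Ideal.mem_span_singleton_mul.mp
    (hcomap l r (r_eq ▸ Ideal.mul_mem_mul (Ideal.mem_span_singleton_self _) hy))
  refine ⟨s, hs, ((IsLocalization.Away.algebraMap_isUnit t).pow l).mul_right_cancel ?_⟩
  rw [hr, map_mul, map_pow, mul_comm]

theorem exists_isApproximation_away [IsLocalization.Away (algebraMap R S t) B] {J : Ideal R}
    (hK : K ≤ Ideal.jacobson ⊥) (ht : algebraMap R S t ∈ nonZeroDivisors S)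
    (hdense : ∀ (m : ℕ) (x : S),
      ∃ r : R, algebraMap R S r - x ∈ Ideal.span {algebraMap R S t ^ m} * K)
    (hcomap : ∀ (m : ℕ) (r : R),
      algebraMap R S r ∈ Ideal.span {algebraMap R S t ^ m} * K → r ∈ Ideal.span {t ^ m} * J) :
    ∃ (_ : TopologicalSpace B) (_ : IsTopologicalRing B) (U : NonUnitalSubalgebra R B),
      IsApproximation A J U := by
  have basis := (submodulesRingBasis_awayFiltration (B := B) (τ := algebraMap R S t)
    (K := K)).toRing_subgroups_basis
  let _ := basis.topology
  have : NonarchimedeanRing B := basis.nonarchimedean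
  refine ⟨basis.topology, inferInstance, awaySubalgebra R B (algebraMap R S t) K 0, ?_, ?_, ?_, ?_⟩
  · intro b
    refine (mem_closure_iff_nhds_basis (basis.hasBasis_nhds b)).mpr fun m _ ↦ ?_
    obtain ⟨a, ha⟩ := exists_algebraMap_sub_mem_awayFiltration (A := A) hdense m b
    exact ⟨_, ⟨a, rfl⟩, ha⟩
  · exact (basis.openAddSubgroup 0).isOpen
  · exact fun b ↦ isUnit_one_add_of_mem_awaySubalgebra hK
  · exact fun a ↦ exists_algebraMap_eq_of_mem_awaySubalgebra
      (IsLocalization.injective B (Submonoid.powers_le.mpr ht)) hcomap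

end AwayTopology

section Completion

variable {R : Type} [CommRing R] {t : R} {I : Ideal R}

theorem tPowIdeal_add (m n : ℕ) :
    tPowIdeal R t I (m + n) = Ideal.span {t ^ m} * tPowIdeal R t I n := by
  rw [tPowIdeal, tPowIdeal, pow_add, ← mul_assoc, Ideal.span_singleton_mul_span_singleton]

theorem tPowIdeal_antitone : Antitone (tPowIdeal R t I) := fun _ _ h ↦
  Ideal.mul_mono_left (Ideal.span_singleton_le_span_singleton.mpr (pow_dvd_pow t h))

theorem mem_tPowIdeal_of_pow_mul_mem (ht : t ∈ nonZeroDivisors R) {m n : ℕ} {r : R}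
    (hr : t ^ m * r ∈ tPowIdeal R t I (m + n)) : r ∈ tPowIdeal R t I n := by
  rw [tPowIdeal_add] at hr
  obtain ⟨s, hs, hsr⟩ := Ideal.mem_span_singleton_mul.mp hr
  rwa [← (mul_cancel_left_mem_nonZeroDivisors (pow_mem ht m)).mp hsr]

/-- The kernel of the projection `R^ → R/tᵐI`. -/
def projKer (R : Type) [CommRing R] (t : R) (I : Ideal R) (m : ℕ) : Ideal (tIComp R t I) :=
  RingHom.ker ((Pi.evalRingHom _ m).comp (tIComp R t I).subtype)

theorem mem_projKer {m : ℕ} {x : tIComp R t I} : x ∈ projKer R t I m ↔ x.1 m = 0 :=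
  Iff.rfl

theorem mk_eq_val_of_le (x : tIComp R t I) {n m : ℕ} (h : n ≤ m) {r : R}
    (hr : Ideal.Quotient.mk (tPowIdeal R t I m) r = x.1 m) :
    Ideal.Quotient.mk (tPowIdeal R t I n) r = x.1 n := by
  rw [← x.2 n m h, ← hr]
  rfl

theorem exists_toTIComp_sub_mem_projKer (m : ℕ) (x : tIComp R t I) :
    ∃ r, toTIComp R t I r - x ∈ projKer R t I m := by
  obtain ⟨r, hr⟩ := Ideal.Quotient.mk_surjective (x.1 m)
  exact ⟨r, mem_projKer.mpr (sub_eq_zero.mpr hr)⟩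

theorem toTIComp_mem_projKer {m : ℕ} {r : R} :
    toTIComp R t I r ∈ projKer R t I m ↔ r ∈ tPowIdeal R t I m :=
  Ideal.Quotient.eq_zero_iff_mem

theorem exists_mem_tPowIdeal_of_mem_projKer {k m : ℕ} {x : tIComp R t I}
    (hx : x ∈ projKer R t I k) (hkm : k ≤ m) :
    ∃ r ∈ tPowIdeal R t I k, Ideal.Quotient.mk (tPowIdeal R t I m) r = x.1 m := by
  obtain ⟨r, hr⟩ := Ideal.Quotient.mk_surjective (x.1 m)
  exact ⟨r, Ideal.Quotient.eq_zero_iff_mem.mp ((mk_eq_val_of_le x hkm hr).trans hx), hr⟩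

theorem toTIComp_mem_nonZeroDivisors (ht : t ∈ nonZeroDivisors R) :
    toTIComp R t I t ∈ nonZeroDivisors (tIComp R t I) := by
  refine mem_nonZeroDivisors_iff_right.mpr fun x hx ↦ Subtype.ext (funext fun n ↦ ?_)
  obtain ⟨r, hr⟩ := Ideal.Quotient.mk_surjective (x.1 (1 + n))
  have mul_mem : t ^ 1 * r ∈ tPowIdeal R t I (1 + n) := by
    rw [pow_one, mul_comm, ← Ideal.Quotient.eq_zero_iff_mem, map_mul, hr]
    exact congr_fun (congr_arg Subtype.val hx) (1 + n)
  rw [← mk_eq_val_of_le x (Nat.le_add_left n 1) hr]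
  exact Ideal.Quotient.eq_zero_iff_mem.mpr (mem_tPowIdeal_of_pow_mul_mem ht mul_mem)

theorem pow_mul_mem_projKer {m n : ℕ} {y : tIComp R t I} (hy : y ∈ projKer R t I n) :
    toTIComp R t I t ^ m * y ∈ projKer R t I (m + n) := by
  obtain ⟨r, hr, hry⟩ := exists_mem_tPowIdeal_of_mem_projKer hy (Nat.le_add_left n m)
  change Ideal.Quotient.mk _ t ^ m * y.1 (m + n) = 0
  rw [← hry, ← map_pow, ← map_mul, Ideal.Quotient.eq_zero_iff_mem, tPowIdeal_add]
  exact Ideal.mul_mem_mul (Ideal.mem_span_singleton_self _) hr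

theorem exists_pow_mul_eq_of_mem_projKer (ht : t ∈ nonZeroDivisors R) {m n : ℕ}
    {x : tIComp R t I} (hx : x ∈ projKer R t I (m + n)) :
    ∃ y ∈ projKer R t I n, toTIComp R t I t ^ m * y = x := by
  have exists_quotient (l : ℕ) : ∃ s ∈ tPowIdeal R t I n,
      Ideal.Quotient.mk (tPowIdeal R t I (m + (n + l))) (t ^ m * s) = x.1 (m + (n + l)) := by
    obtain ⟨r, hr, hrx⟩ := exists_mem_tPowIdeal_of_mem_projKer hx
      (show m + n ≤ m + (n + l) by lia)
    rw [tPowIdeal_add] at hr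
    obtain ⟨s, hs, rfl⟩ := Ideal.mem_span_singleton_mul.mp hr
    exact ⟨s, hs, hrx⟩
  choose s hs hsx using exists_quotient
  have compatible (l k : ℕ) (hlk : l ≤ k) :
      Ideal.Quotient.mk (tPowIdeal R t I l) (s k) = Ideal.Quotient.mk _ (s l) := by
    have mk_eq := (mk_eq_val_of_le x (show m + (n + l) ≤ m + (n + k) by lia) (hsx k)).trans
      (hsx l).symm
    rw [Ideal.Quotient.eq, ← mul_sub] at mk_eq
    exact Ideal.Quotient.eq.mpr
      (tPowIdeal_antitone (Nat.le_add_left l n) (mem_tPowIdeal_of_pow_mul_mem ht mk_eq))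
  refine ⟨⟨fun l ↦ Ideal.Quotient.mk _ (s l), compatible⟩,
    Ideal.Quotient.eq_zero_iff_mem.mpr (hs n), Subtype.ext (funext fun l ↦ ?_)⟩
  rw [← mk_eq_val_of_le x (show l ≤ m + (n + l) by lia) (hsx l), map_mul, map_pow]
  rfl

theorem projKer_add (ht : t ∈ nonZeroDivisors R) (m n : ℕ) :
    projKer R t I (m + n) = Ideal.span {toTIComp R t I t ^ m} * projKer R t I n := by
  ext x
  rw [Ideal.mem_span_singleton_mul]
  refine ⟨exists_pow_mul_eq_of_mem_projKer ht, ?_⟩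
  rintro ⟨y, hy, rfl⟩
  exact pow_mul_mem_projKer hy

theorem isUnit_of_forall_isUnit {x : tIComp R t I} (hx : ∀ n, IsUnit (x.1 n)) : IsUnit x := by
  choose w hw using fun n ↦ (hx n).exists_right_inv
  have compatible (n m : ℕ) (hnm : n ≤ m) : tTrans R t I n m hnm (w m) = w n := by
    refine (hx n).mul_left_cancel ?_
    rw [hw, ← x.2 n m hnm, ← map_mul, hw, map_one]
  exact .of_mul_eq_one ⟨w, compatible⟩ (Subtype.ext (funext hw))

theorem projKer_one_le_jacobson_bot (hI : Ideal.span {t} * I ≤ Ideal.jacobson ⊥) :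
    projKer R t I 1 ≤ Ideal.jacobson ⊥ := by
  refine fun x hx ↦ Ideal.mem_jacobson_bot.mpr fun y ↦ isUnit_of_forall_isUnit fun n ↦ ?_
  obtain ⟨r, hr, hrx⟩ := exists_mem_tPowIdeal_of_mem_projKer
    (Ideal.mul_mem_right y _ hx) (Nat.le_add_left 1 n)
  rw [tPowIdeal, pow_one] at hr
  have isUnit_add_one : IsUnit (r + 1) := by simpa using Ideal.mem_jacobson_bot.mp (hI hr) 1
  have := isUnit_add_one.map (Ideal.Quotient.mk (tPowIdeal R t I n))
  rwa [map_add, mk_eq_val_of_le _ (Nat.le_succ n) hrx, map_one] at this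

variable (R t I) in
theorem isScalarTower_localizationAway :
    letI := (toTIComp R t I).toAlgebra
    letI := (locMap R t I).toAlgebra
    IsScalarTower R (Localization.Away t) (Localization.Away (toTIComp R t I t)) := by
  let := (toTIComp R t I).toAlgebra
  let := (locMap R t I).toAlgebra
  refine .of_algebraMap_eq fun r ↦ ?_
  rw [IsScalarTower.algebraMap_apply R (tIComp R t I) (Localization.Away (toTIComp R t I t))]
  change _ = IsLocalization.Away.map _ _ (toTIComp R t I) t _
  rw [IsLocalization.Away.map, IsLocalization.map_eq]
  rfl

theorem exists_isApproximation_localizationAway (ht : t ∈ nonZeroDivisors R)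
    (hI : Ideal.span {t} * I ≤ Ideal.jacobson ⊥) :
    letI := (toTIComp R t I).toAlgebra
    letI := (locMap R t I).toAlgebra
    ∃ (_ : TopologicalSpace (Localization.Away (toTIComp R t I t)))
      (_ : IsTopologicalRing (Localization.Away (toTIComp R t I t)))
      (U : NonUnitalSubalgebra R (Localization.Away (toTIComp R t I t))),
      IsApproximation (Localization.Away t) (Ideal.span {t} * I) U := by
  let := (toTIComp R t I).toAlgebra
  let := (locMap R t I).toAlgebra
  have := isScalarTower_localizationAway R t I
  have tPowIdeal_one : tPowIdeal R t I 1 = Ideal.span {t} * I := by rw [tPowIdeal, pow_one]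
  have : IsLocalization.Away (algebraMap R (tIComp R t I) t)
    (Localization.Away (toTIComp R t I t)) := Localization.isLocalization
  refine exists_isApproximation_away (S := tIComp R t I) (t := t) (K := projKer R t I 1)
    (projKer_one_le_jacobson_bot hI) (toTIComp_mem_nonZeroDivisors ht)
    (fun m x ↦ ?_) fun m r hr ↦ ?_
  · exact projKer_add ht m 1 ▸ exists_toTIComp_sub_mem_projKer (m + 1) x
  · rw [← tPowIdeal_one, ← tPowIdeal_add, ← toTIComp_mem_projKer, projKer_add ht]
    exact hr

end Completion

/-- Let `t ∈ R` be a non-zero-divisor and `I ⊆ R` an ideal such that the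
pair `(R, tI)` is henselian, and let `R^ := lim_n R/tⁿI` be the `(t,I)`-adic completion.
Then base change along `R[t⁻¹] → R^[t⁻¹]` is a bijection on isomorphism classes of finitely
generated projective modules: (a) two finitely generated projective `R[t⁻¹]`-modules with
isomorphic base changes are isomorphic; (b) every finitely generated projective
`R^[t⁻¹]`-module arises (up to isomorphism) by base change. -/
theorem stmt_15 (R : Type) [CommRing R] (t : R)
    (hreg : ∀ x : R, t * x = 0 → x = 0)
    (I : Ideal R) (hhens : HenselianRing R (Ideal.span {t} * I)) :
    letI : Algebra (Localization.Away t) (Localization.Away (toTIComp R t I t)) :=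
      (locMap R t I).toAlgebra
    (∀ (P P' : Type) [AddCommGroup P] [Module (Localization.Away t) P]
        [AddCommGroup P'] [Module (Localization.Away t) P'],
        Module.Finite (Localization.Away t) P → Module.Projective (Localization.Away t) P →
        Module.Finite (Localization.Away t) P' → Module.Projective (Localization.Away t) P' →
        Nonempty
          ((TensorProduct (Localization.Away t) (Localization.Away (toTIComp R t I t)) P)
            ≃ₗ[Localization.Away (toTIComp R t I t)]
           (TensorProduct (Localization.Away t) (Localization.Away (toTIComp R t I t)) P')) →
        Nonempty (P ≃ₗ[Localization.Away t] P'))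
    ∧ (∀ (Q : Type) [AddCommGroup Q] [Module (Localization.Away (toTIComp R t I t)) Q],
        Module.Finite (Localization.Away (toTIComp R t I t)) Q →
        Module.Projective (Localization.Away (toTIComp R t I t)) Q →
        ∃ (P : Type) (_ : AddCommGroup P) (_ : Module (Localization.Away t) P),
          Module.Finite (Localization.Away t) P ∧
          Module.Projective (Localization.Away t) P ∧
          Nonempty
            ((TensorProduct (Localization.Away t) (Localization.Away (toTIComp R t I t)) P)
              ≃ₗ[Localization.Away (toTIComp R t I t)] Q)) := by
  let := (toTIComp R t I).toAlgebra
  let := (locMap R t I).toAlgebra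
  have := isScalarTower_localizationAway R t I
  have ht : t ∈ nonZeroDivisors R := mem_nonZeroDivisors_iff_left.mpr hreg
  obtain ⟨_, _, U, hU⟩ := exists_isApproximation_localizationAway ht hhens.jac
  refine ⟨fun P P' _ _ _ _ _ _ _ _ ⟨φ⟩ ↦ hU.nonempty_linearEquiv hhens.jac φ, fun Q _ _ _ _ ↦ ?_⟩
  obtain ⟨n, P, hP⟩ := hU.exists_projective_baseChange Q
  exact ⟨P, inferInstance, inferInstance, hP⟩
end

section
/- Let (A, I) be a henselian pair of commutative rings. Then: (i) for every finitely generated projective A/I-module P̄ there exists a finitely generated projective A-module P together with an isomorphism P ⊗_A A/I ≅ P̄ of A/I-modules; (ii) if P₁ and P₂ are finitely generated projective A-modules and β̄ : P₁ ⊗_A A/I → P₂ ⊗_A A/I is an isomorphism of A/I-modules, then there exists an isomorphism β : P₁ → P₂ of A-modules with β ⊗_A id_{A/I} = β̄. -/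
open TensorProduct

/-!
Isomorphisms lift by projectivity, and a lift is again an isomorphism by Nakayama's lemma and the
fact that a surjective endomorphism of a finite module is injective.

A finite projective `A/I`-module is the image of an idempotent of `(A/I)ⁿ`, so lifting it amounts to
lifting that idempotent to `Aⁿ`. Take any lift `u`. By Cayley–Hamilton `u` is killed by a monic
polynomial reducing to `(X² - X)ᵐ = Xᵐ (X - 1)ᵐ` modulo `I`. Once this factorization is lifted to
coprime polynomials over `A`, the Chinese remainder theorem provides a polynomial in `u` which is an
idempotent congruent to `u`.

Coprime factorizations of a monic polynomial are classified by an étale `A`-algebra `S` which is a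
localization of a finite, finitely presented `A`-algebra `R`, so a factorization modulo `I` is an
algebra map `S → A/I` to be lifted to `S → A`. Since `S` is étale, this map cuts a direct factor
`A/I` out of `R/IR`. An element `b` of `R` lifting the corresponding idempotent satisfies a monic
equation reducing to `(X - 1) Xⁿ` modulo `I`; the henselian property lifts the simple root `1`,
which turns `b` into an honest idempotent `e` of `R`. The factor `eR` is étale over `A` and agrees
with `A` modulo `I`, hence equals `A` by Nakayama, and `S → eR = A` is the required lift.
-/

open Polynomial

universe u

theorem exists_monic_map_eq_prod_and_aeval_eq_zero {A M ι : Type*} [CommRing A] [AddCommGroup M]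
    [Module A M] [Fintype ι] {I : Ideal A} {v : ι → M} (hv : Submodule.span A (Set.range v) = ⊤)
    (d : ι → A) (f : Module.End A M) (hf : ∀ j, f (v j) - d j • v j ∈ (I • ⊤ : Submodule A M)) :
    ∃ χ : A[X], χ.Monic ∧
      χ.map (Ideal.Quotient.mk I) = ∏ j, (X - C (Ideal.Quotient.mk I (d j))) ∧
      aeval f χ = 0 := by
  classical
  have exists_coeff (j : ι) : ∃ c : ι → A, (∀ i, c i ∈ I) ∧
      ∑ i, c i • v i = f (v j) - d j • v j := by
    obtain ⟨c, hcI, hc⟩ := (Submodule.mem_ideal_smul_span_iff_exists_sum I v _).1 (hv ▸ hf j)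
    exact ⟨c, hcI, (c.sum_fintype (fun i a => a • v i) fun _ => zero_smul _ _).symm.trans hc⟩
  choose c hcI hc using exists_coeff
  let T : Matrix ι ι A := Matrix.diagonal d + Matrix.of fun i j => c j i
  have hT : T.Represents v f := by
    rw [Matrix.represents_iff']
    intro j
    simp [T, add_smul, Finset.sum_add_distrib, hc, Matrix.diagonal_apply]
  have hTmap : T.map (Ideal.Quotient.mk I) =
      Matrix.diagonal fun i => Ideal.Quotient.mk I (d i) := by
    ext i j
    have hc_zero : Ideal.Quotient.mk I (c j i) = 0 := Ideal.Quotient.eq_zero_iff_mem.2 (hcI j i)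
    simp [T, Matrix.diagonal_apply, hc_zero, apply_ite (Ideal.Quotient.mk I)]
  refine ⟨T.charpoly, T.charpoly_monic, ?_, ?_⟩
  · rw [← Matrix.charpoly_map, hTmap, Matrix.charpoly_diagonal]
  · let T' : Matrix.isRepresentation A v := ⟨T, f, hT⟩
    have hT' : aeval T' T.charpoly = 0 :=
      Subtype.ext ((aeval_subalgebra_coe _ _ _).trans T.aeval_self_charpoly)
    rw [← Matrix.isRepresentation.eq_toEnd_of_represents A v hv T' hT, aeval_algHom_apply, hT',
      map_zero]

theorem exists_isIdempotentElem_aeval_of_isRoot {A R : Type*} [CommRing A] [CommRing R]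
    [Algebra A R] {χ : A[X]} {b : R} (hb : aeval b χ = 0) {l : A} (hl : χ.IsRoot l)
    (hl' : IsUnit (χ.derivative.eval l)) :
    ∃ f : A[X], f.eval l = 1 ∧ IsIdempotentElem (aeval b f) ∧
      b * aeval b f = algebraMap A R l * aeval b f := by
  obtain ⟨q, rfl⟩ := dvd_iff_isRoot.2 hl
  obtain ⟨w, hw⟩ := hl'.exists_left_inv
  have hwq : (C w * q).eval l = 1 := by simpa using hw
  obtain ⟨t, ht⟩ : X - C l ∣ C w * q - 1 := dvd_iff_isRoot.2 (by simp [hwq])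
  have h_eigen : b * aeval b (C w * q) = algebraMap A R l * aeval b (C w * q) := by
    simp only [map_mul, map_sub, aeval_X, aeval_C] at hb ⊢
    linear_combination algebraMap A R w * hb
  refine ⟨C w * q, hwq, ?_, h_eigen⟩
  have ht' : aeval b (C w * q) - 1 = (b - algebraMap A R l) * aeval b t := by
    simpa using congrArg (aeval b) ht
  rw [IsIdempotentElem]
  linear_combination aeval b (C w * q) * ht' + aeval b t * h_eigen

theorem exists_isRoot_isUnit_derivative {A : Type*} [CommRing A] {I : Ideal A} [HenselianRing A I]
    {χ : A[X]} (hχ : χ.Monic) {a : A}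
    (ha : (χ.map (Ideal.Quotient.mk I)).IsRoot (Ideal.Quotient.mk I a))
    (ha' : IsUnit ((χ.map (Ideal.Quotient.mk I)).derivative.eval (Ideal.Quotient.mk I a))) :
    ∃ l, χ.IsRoot l ∧ Ideal.Quotient.mk I l = Ideal.Quotient.mk I a ∧
      IsUnit (χ.derivative.eval l) := by
  rw [IsRoot, eval_map_apply, Ideal.Quotient.eq_zero_iff_mem] at ha
  rw [derivative_map, eval_map_apply] at ha'
  obtain ⟨l, hl, hla⟩ := HenselianRing.is_henselian χ hχ a ha ha'
  have hla : Ideal.Quotient.mk I l = Ideal.Quotient.mk I a := Ideal.Quotient.eq.2 hla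
  refine ⟨l, hl, hla, (isLocalHom_of_le_jacobson_bot I HenselianRing.jac).map_nonunit _ ?_⟩
  rwa [← eval_map_apply, hla, eval_map_apply]

theorem isIdempotentElem_ker_algebraMap_of_formallyUnramified (k R S B : Type*)
    [CommRing k] [CommRing R] [CommRing S] [CommRing B]
    [Algebra k S] [Algebra R S] [Algebra k B] [Algebra R B] [Algebra S B]
    [IsScalarTower k S B] [IsScalarTower R S B]
    [Algebra.FormallyUnramified k S] [Algebra.FormallyEtale R S] [Algebra.FormallyEtale k B]
    (hB : Function.Surjective (algebraMap R B)) :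
    IsIdempotentElem (RingHom.ker (algebraMap R B)) := by
  have : Algebra.FormallyEtale S B := .of_restrictScalars (R := k)
  rw [← Algebra.FormallyEtale.iff_of_surjective hB]
  exact .comp R S B

section Isolation

variable {A R : Type*} [CommRing A] [CommRing R] [Algebra A R] {I : Ideal A}

theorem surjective_algHom_quotient (φ : R →ₐ[A] A ⧸ I) : Function.Surjective φ := by
  intro x
  obtain ⟨a, rfl⟩ := Ideal.Quotient.mk_surjective x
  exact ⟨algebraMap A R a, φ.commutes a⟩

theorem map_algebraMap_le_ker (φ : R →ₐ[A] A ⧸ I) :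
    I.map (algebraMap A R) ≤ RingHom.ker φ := by
  rw [Ideal.map_le_iff_le_comap]
  intro a ha
  rw [Ideal.mem_comap, RingHom.mem_ker, φ.commutes]
  exact Ideal.Quotient.eq_zero_iff_mem.2 ha

/-- The map `R/IR → A/I` induced by `φ`, as a map of `A/I`-algebras. -/
def reductionHom (φ : R →ₐ[A] A ⧸ I) : R ⧸ I.map (algebraMap A R) →ₐ[A ⧸ I] A ⧸ I :=
  AlgHom.extendScalarsOfSurjective Ideal.Quotient.mk_surjective
    (Ideal.Quotient.liftₐ _ φ (map_algebraMap_le_ker φ))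

theorem formallyUnramified_quotient_tensor (S : Type*) [CommRing S] [Algebra A S] [Algebra R S]
    [IsScalarTower A R S] [Algebra.FormallyUnramified A S] :
    Algebra.FormallyUnramified (A ⧸ I) ((R ⧸ I.map (algebraMap A R)) ⊗[R] S) := by
  have : Algebra.FormallyUnramified A ((R ⧸ I.map (algebraMap A R)) ⊗[R] S) :=
    .of_surjective (Algebra.TensorProduct.includeRight.restrictScalars A)
      (Algebra.TensorProduct.includeRight_surjective S Ideal.Quotient.mk_surjective)
  exact .of_restrictScalars A (A ⧸ I) _

theorem isIdempotentElem_ker_reductionHom {S : Type*} [CommRing S] [Algebra A S] [Algebra R S]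
    [IsScalarTower A R S] [Algebra.FormallyUnramified A S] [Algebra.FormallyEtale R S]
    (Φ : S →ₐ[A] A ⧸ I) :
    IsIdempotentElem (RingHom.ker (reductionHom (Φ.comp (IsScalarTower.toAlgHom A R S)))) := by
  let φ := Φ.comp (IsScalarTower.toAlgHom A R S)
  let Rb := R ⧸ I.map (algebraMap A R)
  have := formallyUnramified_quotient_tensor (R := R) (I := I) S
  let : Algebra R (A ⧸ I) := φ.toRingHom.toAlgebra
  let : Algebra S (A ⧸ I) := Φ.toRingHom.toAlgebra
  have : IsScalarTower R S (A ⧸ I) := .of_algebraMap_eq fun _ => rfl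
  let : Algebra Rb (A ⧸ I) := (reductionHom φ).toRingHom.toAlgebra
  have : IsScalarTower R Rb (A ⧸ I) := .of_algebraMap_eq fun _ => rfl
  let ψ : Rb ⊗[R] S →ₐ[Rb] A ⧸ I := Algebra.TensorProduct.lift (Algebra.ofId Rb (A ⧸ I))
    (IsScalarTower.toAlgHom R S (A ⧸ I)) fun _ _ => .all _ _
  let : Algebra (Rb ⊗[R] S) (A ⧸ I) := ψ.toRingHom.toAlgebra
  have : IsScalarTower Rb (Rb ⊗[R] S) (A ⧸ I) := .of_algHom ψ
  have : IsScalarTower (A ⧸ I) Rb (A ⧸ I) := .of_algHom (reductionHom φ)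
  have : IsScalarTower (A ⧸ I) (Rb ⊗[R] S) (A ⧸ I) := .of_algHom (ψ.restrictScalars (A ⧸ I))
  exact isIdempotentElem_ker_algebraMap_of_formallyUnramified (A ⧸ I) Rb (Rb ⊗[R] S) (A ⧸ I)
    (surjective_algHom_quotient ((reductionHom φ).restrictScalars A))

theorem ker_reductionHom_fg [Module.Finite A R] (φ : R →ₐ[A] A ⧸ I) :
    (RingHom.ker (reductionHom φ)).FG := by
  have : Module.Finite (A ⧸ I) (R ⧸ I.map (algebraMap A R)) := .of_restrictScalars_finite A _ _
  exact Submodule.FG.of_restrictScalars (A ⧸ I) <|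
    Module.FinitePresentation.fg_ker (reductionHom φ).toLinearMap
      (surjective_algHom_quotient ((reductionHom φ).restrictScalars A))

/-- `b` lifts the idempotent of `R/IR` that cuts out the direct factor `A/I` onto which `φ`
projects. The kernel of `φ` modulo `IR` is then generated by `1 - b`, which is encoded as its being
annihilated by `b`. -/
structure Isolates (φ : R →ₐ[A] A ⧸ I) (b : R) : Prop where
  map_eq_one : φ b = 1
  mul_mem : ∀ x, φ x = 0 → b * x ∈ I.map (algebraMap A R)

theorem exists_isolates {S : Type*} [CommRing S] [Algebra A S] [Algebra R S]
    [IsScalarTower A R S] [Module.Finite A R]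
    [Algebra.FormallyUnramified A S] [Algebra.FormallyEtale R S] (Φ : S →ₐ[A] A ⧸ I) :
    ∃ b : R, Isolates (Φ.comp (IsScalarTower.toAlgHom A R S)) b := by
  set φ := Φ.comp (IsScalarTower.toAlgHom A R S)
  obtain ⟨ε, hε, hker⟩ := (Ideal.isIdempotentElem_iff_of_fg _ (ker_reductionHom_fg φ)).1
    (isIdempotentElem_ker_reductionHom Φ)
  obtain ⟨c, rfl⟩ := Ideal.Quotient.mk_surjective ε
  have hc : Ideal.Quotient.mk _ c ∈ RingHom.ker (reductionHom φ) :=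
    hker ▸ Submodule.mem_span_singleton_self _
  have hφc : φ c = 0 := hc
  refine ⟨1 - c, by simp [hφc], fun x hx => ?_⟩
  have hx' : Ideal.Quotient.mk (I.map (algebraMap A R)) x ∈ RingHom.ker (reductionHom φ) := hx
  rw [hker, Ideal.submodule_span_eq, Ideal.mem_span_singleton] at hx'
  rw [← Ideal.Quotient.eq_zero_iff_mem, map_mul, map_sub, map_one]
  obtain ⟨y, hy⟩ := hx'
  rw [hy, ← mul_assoc, hε.one_sub_mul_self, zero_mul]

theorem algebraMap_surjective_of_ker_le {C : Type*} [CommRing C] [Algebra A C]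
    [Module.Finite A C] (hI : I ≤ Ideal.jacobson ⊥) (ρ : C →ₐ[A] A ⧸ I)
    (hρ : RingHom.ker ρ ≤ I.map (algebraMap A C)) : Function.Surjective (algebraMap A C) := by
  suffices h : (⊤ : Submodule A C) ≤ LinearMap.range (Algebra.linearMap A C) from
    fun x => h (Submodule.mem_top (x := x))
  refine Submodule.le_of_le_smul_of_le_jacobson_bot Module.Finite.fg_top hI fun x _ => ?_
  obtain ⟨a, ha⟩ := Ideal.Quotient.mk_surjective (ρ x)
  have hx : x - algebraMap A C a ∈ (I • ⊤ : Submodule A C) := by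
    rw [Ideal.smul_top_eq_map]
    refine hρ (RingHom.mem_ker.2 ?_)
    rw [map_sub, ρ.commutes, Ideal.Quotient.algebraMap_eq, ha, sub_self]
  rw [← add_sub_cancel (algebraMap A C a) x]
  exact Submodule.add_mem_sup ⟨a, rfl⟩ hx

theorem algebraMap_bijective_of_formallyEtale {C : Type*} [CommRing C] [Algebra A C]
    [Algebra.FinitePresentation A C] [Algebra.FormallyEtale A C] (hI : I ≤ Ideal.jacobson ⊥)
    (ρ : C →ₐ[A] A ⧸ I) (hC : Function.Surjective (algebraMap A C)) :
    Function.Bijective (algebraMap A C) := by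
  set J := RingHom.ker (algebraMap A C)
  have hJ : IsIdempotentElem J := (Algebra.FormallyEtale.iff_of_surjective hC).1 ‹_›
  have hJfg : J.FG := Algebra.FinitePresentation.ker_fG_of_surjective (Algebra.ofId A C) hC
  have hJI : J ≤ I := fun a ha => by
    rw [← Ideal.Quotient.eq_zero_iff_mem, ← Ideal.Quotient.algebraMap_eq, ← ρ.commutes,
      RingHom.mem_ker.1 ha, map_zero]
  have hJbot : J = ⊥ :=
    Submodule.eq_bot_of_le_smul_of_le_jacobson_bot J J hJfg hJ.ge (hJI.trans hI)
  exact ⟨(RingHom.injective_iff_ker_eq_bot _).2 hJbot, hC⟩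

theorem isUnit_of_isUnit_algHom_quotient {C : Type*} [CommRing C] [Algebra A C]
    (hI : I ≤ Ideal.jacobson ⊥) (ρ : C →ₐ[A] A ⧸ I) (hC : Function.Surjective (algebraMap A C))
    {x : C} (hx : IsUnit (ρ x)) : IsUnit x := by
  obtain ⟨a, rfl⟩ := hC x
  rw [ρ.commutes] at hx
  exact ((isLocalHom_of_le_jacobson_bot I hI).map_nonunit a hx).map _

theorem formallyEtale_quotient_span_one_sub_s17 {e : R} (he : IsIdempotentElem e) :
    Algebra.FormallyEtale R (R ⧸ Ideal.span {1 - e}) := by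
  rw [Algebra.FormallyEtale.iff_of_surjective Ideal.Quotient.mk_surjective,
    Ideal.Quotient.algebraMap_eq, Ideal.mk_ker, IsIdempotentElem,
    Ideal.span_singleton_mul_span_singleton, he.one_sub.eq]

theorem exists_algHom_comp_eq_of_bijective {S C : Type*} [CommRing S] [Algebra A S]
    [CommRing C] [Algebra A C] (hC : Function.Bijective (algebraMap A C))
    (ρ : C →ₐ[A] A ⧸ I) (θ : S →ₐ[A] C) :
    ∃ ψ : S →ₐ[A] A, (Ideal.Quotient.mkₐ A I).comp ψ = ρ.comp θ := by
  let E : A ≃ₐ[A] C := AlgEquiv.ofBijective (Algebra.ofId A C) hC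
  refine ⟨E.symm.toAlgHom.comp θ, ?_⟩
  have hE : Ideal.Quotient.mkₐ A I = ρ.comp E.toAlgHom := Subsingleton.elim _ _
  ext x
  simp [hE]

namespace Isolates

variable {φ : R →ₐ[A] A ⧸ I} {b : R}

theorem mul_mem_smul_top (hb : Isolates φ b) {x : R} (hx : φ x = 0) :
    b * x ∈ (I • ⊤ : Submodule A R) := by
  rw [Ideal.smul_top_eq_map]
  exact hb.mul_mem x hx

theorem span_range_option_elim_eq_top [Module.Finite A R] (hI : I ≤ Ideal.jacobson ⊥)
    (hb : Isolates φ b) {s : Set R} (hs : Submodule.span A s = ⊤) :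
    Submodule.span A (Set.range fun i : Option s => i.elim b fun r => (1 - b) * r) = ⊤ := by
  set V := Submodule.span A (Set.range fun i : Option s => i.elim b fun r => (1 - b) * r)
  have hbV : b ∈ V := Submodule.subset_span ⟨none, rfl⟩
  rw [eq_top_iff]
  refine Submodule.le_of_le_smul_of_le_jacobson_bot Module.Finite.fg_top hI ?_
  conv_lhs => rw [← hs]
  refine Submodule.span_le.2 fun r hr => ?_
  obtain ⟨a, ha⟩ := Ideal.Quotient.mk_surjective (φ r)
  have hrV : (1 - b) * r ∈ V := Submodule.subset_span ⟨some ⟨r, hr⟩, rfl⟩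
  have hφ : φ (r - algebraMap A R a) = 0 := by
    rw [map_sub, φ.commutes, Ideal.Quotient.algebraMap_eq, ha, sub_self]
  have h_decomp : r = ((1 - b) * r + a • b) + b * (r - algebraMap A R a) := by
    rw [Algebra.smul_def]; ring
  rw [SetLike.mem_coe, h_decomp]
  exact Submodule.add_mem_sup (add_mem hrV (V.smul_mem a hbV)) (hb.mul_mem_smul_top hφ)

theorem exists_monic_aeval_eq_zero [Module.Finite A R] (hI : I ≤ Ideal.jacobson ⊥)
    (hb : Isolates φ b) :
    ∃ (χ : A[X]) (n : ℕ), χ.Monic ∧ χ.map (Ideal.Quotient.mk I) = (X - 1) * X ^ n ∧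
      aeval b χ = 0 := by
  obtain ⟨s, hs⟩ := Module.Finite.fg_top (R := A) (M := R)
  obtain ⟨χ, hχ, hχmap, hχb⟩ := exists_monic_map_eq_prod_and_aeval_eq_zero (I := I)
    (hb.span_range_option_elim_eq_top hI hs) (fun i => i.elim 1 fun _ => 0)
    (Algebra.lmul A R b) <| by
      rintro (_ | r)
      · simpa [mul_sub] using hb.mul_mem_smul_top (x := b - 1) (by simp [hb.map_eq_one])
      · simpa using hb.mul_mem_smul_top (x := (1 - b) * r) (by simp [hb.map_eq_one])
  refine ⟨χ, s.card, hχ, by simp [hχmap, Fintype.prod_option], ?_⟩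
  rw [aeval_algHom_apply] at hχb
  simpa using LinearMap.congr_fun hχb 1

theorem exists_isIdempotentElem [HenselianRing A I] [Module.Finite A R] (hb : Isolates φ b) :
    ∃ e : R, IsIdempotentElem e ∧ Isolates φ e := by
  obtain ⟨χ, n, hχ, hχmap, hχb⟩ := hb.exists_monic_aeval_eq_zero HenselianRing.jac
  obtain ⟨l, hl, hl1, hl'⟩ := exists_isRoot_isUnit_derivative (I := I) hχ (a := 1)
    (by simp [hχmap]) (by simp [hχmap])
  have hlu : IsUnit l :=
    (isLocalHom_of_le_jacobson_bot I HenselianRing.jac).map_nonunit l (by simp [hl1])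
  obtain ⟨w, hw⟩ := hlu.exists_left_inv
  obtain ⟨f, hfl, hf, hbf⟩ := exists_isIdempotentElem_aeval_of_isRoot hχb hl hl'
  refine ⟨aeval b f, hf, ?_, fun x hx => ?_⟩
  · have hφb : φ b = algebraMap A (A ⧸ I) l := hb.map_eq_one.trans (hl1.trans (map_one _)).symm
    rw [← aeval_algHom_apply, hφb, aeval_algebraMap_apply_eq_algebraMap_eval, hfl, map_one]
  · have hw' : algebraMap A R w * algebraMap A R l = 1 := by rw [← map_mul, hw, map_one]
    have h_eq : aeval b f * x = algebraMap A R w * aeval b f * (b * x) := by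
      linear_combination -(aeval b f * x) * hw' - algebraMap A R w * x * hbf
    rw [h_eq]
    exact Ideal.mul_mem_left _ _ (hb.mul_mem x hx)

/-- The map `R/(1 - b) → A/I` induced by `φ`. When `b` is idempotent,
`R/(1 - b)` is the direct factor `bR` of `R`. -/
def factorHom (hb : Isolates φ b) :
    R ⧸ Ideal.span {1 - b} →ₐ[A] A ⧸ I :=
  Ideal.Quotient.liftₐ _ φ <| by
    change Ideal.span {1 - b} ≤ RingHom.ker φ
    simp [Ideal.span_le, Set.singleton_subset_iff, RingHom.mem_ker, hb.map_eq_one]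

theorem ker_factorHom_le (hb : Isolates φ b) :
    RingHom.ker hb.factorHom ≤ I.map (algebraMap A (R ⧸ Ideal.span {1 - b})) := by
  intro x hx
  obtain ⟨r, rfl⟩ := Ideal.Quotient.mk_surjective x
  have hr : Ideal.Quotient.mk (Ideal.span {1 - b}) r = Ideal.Quotient.mk _ (b * r) := by
    rw [Ideal.Quotient.eq, Ideal.mem_span_singleton]
    exact ⟨r, by ring⟩
  rw [hr, IsScalarTower.algebraMap_eq A R, ← Ideal.map_map]
  exact Ideal.mem_map_of_mem _ (hb.mul_mem r hx)

end Isolates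

theorem exists_algHom_comp_eq_of_isLocalization [HenselianRing A I] [Module.Finite A R]
    [Algebra.FinitePresentation A R] {S : Type*} [CommRing S] [Algebra A S] [Algebra R S]
    [IsScalarTower A R S] (M : Submonoid R) [IsLocalization M S] [Algebra.FormallyEtale A S]
    (Φ : S →ₐ[A] A ⧸ I) :
    ∃ ψ : S →ₐ[A] A, (Ideal.Quotient.mkₐ A I).comp ψ = Φ := by
  have hI : I ≤ Ideal.jacobson ⊥ := HenselianRing.jac
  have : Algebra.FormallyEtale R S := .of_isLocalization M
  obtain ⟨b, hb⟩ := exists_isolates (R := R) Φ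
  obtain ⟨e, he_idem, he⟩ := hb.exists_isIdempotentElem
  let C := R ⧸ Ideal.span {1 - e}
  have hC : Function.Surjective (algebraMap A C) :=
    algebraMap_surjective_of_ker_le hI he.factorHom he.ker_factorHom_le
  have isUnit_mk (m : M) : IsUnit (Ideal.Quotient.mkₐ A (Ideal.span {1 - e}) m) :=
    isUnit_of_isUnit_algHom_quotient hI he.factorHom hC ((IsLocalization.map_units S m).map Φ)
  let θ : S →ₐ[A] C := IsLocalization.liftAlgHom isUnit_mk
  have θ_algebraMap (r : R) : θ (algebraMap R S r) = algebraMap R C r :=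
    IsLocalization.lift_eq isUnit_mk r
  have hθ : he.factorHom.comp θ = Φ :=
    IsLocalization.algHom_ext M (AlgHom.ext fun r => congrArg he.factorHom (θ_algebraMap r))
  let : Algebra S C := θ.toRingHom.toAlgebra
  have : IsScalarTower A S C := .of_algHom θ
  have : IsScalarTower R S C := .of_algebraMap_eq fun r => (θ_algebraMap r).symm
  have : Algebra.FormallyEtale R C := formallyEtale_quotient_span_one_sub_s17 he_idem
  have : Algebra.FormallyEtale S C := .of_restrictScalars (R := R)
  have : Algebra.FormallyEtale A C := .comp A S C
  have : Algebra.FinitePresentation A C := .quotient (Submodule.fg_span_singleton _)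
  obtain ⟨ψ, hψ⟩ := exists_algHom_comp_eq_of_bijective
    (algebraMap_bijective_of_formallyEtale hI he.factorHom hC) he.factorHom θ
  exact ⟨ψ, hψ.trans hθ⟩

end Isolation

theorem exists_mul_eq_of_map_eq_mul {A : Type*} [CommRing A] {I : Ideal A} [HenselianRing A I]
    {p : A[X]} (hp : p.Monic) {g₀ h₀ : (A ⧸ I)[X]} (hg₀ : g₀.Monic) (hh₀ : h₀.Monic)
    (hcop : IsCoprime g₀ h₀) (hmap : p.map (Ideal.Quotient.mk I) = g₀ * h₀) :
    ∃ g h : A[X], g * h = p ∧ IsCoprime g h ∧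
      g.map (Ideal.Quotient.mk I) = g₀ ∧ h.map (Ideal.Quotient.mk I) = h₀ := by
  cases subsingleton_or_nontrivial (A ⧸ I) with
  | inl _ =>
    exact ⟨p, 1, mul_one p, isCoprime_one_right, Subsingleton.elim _ _, Subsingleton.elim _ _⟩
  | inr _ =>
    have hdeg : p.natDegree = g₀.natDegree + h₀.natDegree := by
      rw [← hp.natDegree_map (Ideal.Quotient.mk I), hmap, hg₀.natDegree_mul hh₀]
    let pd : MonicDegreeEq A p.natDegree := .mk p hp rfl
    let Φ := (UniversalCoprimeFactorizationRing.homEquiv (A ⧸ I) _ _ hdeg pd).symm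
        ⟨(.mk g₀ hg₀ rfl, .mk h₀ hh₀ rfl), hmap.symm, hcop⟩
    obtain ⟨ψ, hψ⟩ := exists_algHom_comp_eq_of_isLocalization
      (.powers (UniversalFactorizationRing.presentation _ _ hdeg pd).jacobian) Φ
    let q := UniversalCoprimeFactorizationRing.homEquiv A _ _ hdeg pd ψ
    have hfst := UniversalCoprimeFactorizationRing.homEquiv_comp_fst A _ _ hdeg pd ψ
      (Ideal.Quotient.mkₐ A I)
    have hsnd := UniversalCoprimeFactorizationRing.homEquiv_comp_snd A _ _ hdeg pd ψ
      (Ideal.Quotient.mkₐ A I)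
    rw [hψ, Equiv.apply_symm_apply] at hfst hsnd
    exact ⟨q.1.1.1, q.1.2.1, by simpa [pd] using q.2.1, q.2.2, (congrArg Subtype.val hfst).symm,
      (congrArg Subtype.val hsnd).symm⟩

theorem exists_dvd_sq_sub_self {A : Type*} [CommRing A] {I : Ideal A} [HenselianRing A I]
    {p : A[X]} (hp : p.Monic) {n : ℕ} (hn : n ≠ 0)
    (hmap : p.map (Ideal.Quotient.mk I) = (X ^ 2 - X) ^ n) :
    ∃ f : A[X], p ∣ f ^ 2 - f ∧ X ^ 2 - X ∣ (f - X).map (Ideal.Quotient.mk I) := by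
  have hcop : IsCoprime (X : (A ⧸ I)[X]) (X - 1) := ⟨1, -1, by ring⟩
  have hmonic : (X - 1 : (A ⧸ I)[X]).Monic := by simpa using monic_X_sub_C (1 : A ⧸ I)
  obtain ⟨g, h, rfl, ⟨s, t, hst⟩, hg, hh⟩ := exists_mul_eq_of_map_eq_mul hp (monic_X_pow n)
    (hmonic.pow n) hcop.pow (by rw [hmap, ← mul_pow]; ring)
  refine ⟨s * g, ⟨-(s * t), by linear_combination s * g * hst⟩, ?_⟩
  have hst' := congrArg (Polynomial.map (Ideal.Quotient.mk I)) hst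
  simp only [Polynomial.map_add, Polynomial.map_mul, Polynomial.map_one, hg, hh] at hst'
  rw [show (X ^ 2 - X : (A ⧸ I)[X]) = X * (X - 1) by ring]
  simp only [Polynomial.map_sub, Polynomial.map_mul, map_X, hg]
  refine hcop.mul_dvd ?_ ?_
  · exact dvd_sub (Dvd.dvd.mul_left (dvd_pow_self _ hn) _) dvd_rfl
  · rw [show s.map (Ideal.Quotient.mk I) * X ^ n - X =
      -(t.map (Ideal.Quotient.mk I) * (X - 1) ^ n) - (X - 1) by linear_combination hst']
    exact dvd_sub ((Dvd.dvd.mul_left (dvd_pow_self _ hn) _).neg_right) dvd_rfl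

section Endomorphism

variable {A F : Type*} [CommRing A] [AddCommGroup F] [Module A F] {I : Ideal A}

theorem range_aeval_le_smul_top (u : Module.End A F) {r : A[X]}
    (hr : r.map (Ideal.Quotient.mk I) = 0) :
    LinearMap.range (aeval u r) ≤ I • ⊤ := by
  rintro _ ⟨x, rfl⟩
  rw [aeval_eq_sum_range, LinearMap.sum_apply]
  refine Submodule.sum_mem _ fun i _ => Submodule.smul_mem_smul ?_ Submodule.mem_top
  rw [← Ideal.Quotient.eq_zero_iff_mem, ← coeff_map, hr, coeff_zero]

theorem range_aeval_le_smul_top_of_dvd_map {u : Module.End A F} {s r : A[X]}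
    (hs : LinearMap.range (aeval u s) ≤ I • ⊤)
    (hsr : s.map (Ideal.Quotient.mk I) ∣ r.map (Ideal.Quotient.mk I)) :
    LinearMap.range (aeval u r) ≤ I • ⊤ := by
  obtain ⟨q', hq⟩ := hsr
  obtain ⟨q, rfl⟩ := map_surjective _ Ideal.Quotient.mk_surjective q'
  have hrem : (r - s * q).map (Ideal.Quotient.mk I) = 0 := by simp [hq]
  rintro _ ⟨x, rfl⟩
  rw [← add_sub_cancel (s * q) r, map_add, map_mul]
  exact add_mem (hs ⟨_, rfl⟩) (range_aeval_le_smul_top u hrem ⟨x, rfl⟩)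

theorem exists_monic_aeval_eq_zero_of_range_le [Module.Finite A F] (f : Module.End A F)
    (hf : LinearMap.range f ≤ I • ⊤) :
    ∃ (χ : A[X]) (n : ℕ), χ.Monic ∧ χ.map (Ideal.Quotient.mk I) = X ^ n ∧ aeval f χ = 0 := by
  obtain ⟨s, hs⟩ := Module.Finite.fg_top (R := A) (M := F)
  obtain ⟨χ, hχ, hχmap, hχf⟩ := exists_monic_map_eq_prod_and_aeval_eq_zero (I := I)
    (v := ((↑) : s → F)) (by simpa using hs) 0 f fun j => by simpa using hf ⟨_, rfl⟩
  exact ⟨χ, s.card, hχ, by simpa using hχmap, hχf⟩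

theorem exists_isIdempotentElem_range_sub_le [HenselianRing A I] [Module.Finite A F]
    (u : Module.End A F) (hu : LinearMap.range (u ^ 2 - u) ≤ I • ⊤) :
    ∃ e : Module.End A F, IsIdempotentElem e ∧ LinearMap.range (e - u) ≤ I • ⊤ := by
  obtain ⟨χ, n, hχ, hχmap, hχu⟩ := exists_monic_aeval_eq_zero_of_range_le _ hu
  -- The factor `X` makes the exponent in `hpmap` positive.
  let p : A[X] := (χ * X).comp (X ^ 2 - X)
  have hp : p.Monic := by
    nontriviality A
    have hdeg : ((X : A[X]) ^ 2 - X).natDegree = 2 := by compute_degree!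
    exact (hχ.mul monic_X).comp (by monicity!) (by rw [hdeg]; exact two_ne_zero)
  have hpmap : p.map (Ideal.Quotient.mk I) = (X ^ 2 - X) ^ (n + 1) := by
    simp [p, Polynomial.map_comp, hχmap, pow_succ]
  have hpu : aeval u p = 0 := by simp [p, aeval_comp, hχu]
  obtain ⟨f, ⟨q, hq⟩, hf⟩ := exists_dvd_sq_sub_self hp n.succ_ne_zero hpmap
  refine ⟨aeval u f, ?_, ?_⟩
  · rw [IsIdempotentElem, ← sub_eq_zero, ← pow_two, ← map_pow, ← map_sub, hq, map_mul, hpu,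
      zero_mul]
  · have h_range := range_aeval_le_smul_top_of_dvd_map (u := u) (s := X ^ 2 - X) (r := f - X)
      (by simpa using hu) (by simpa using hf)
    rwa [map_sub, aeval_X] at h_range

end Endomorphism

section BaseChange

variable {A : Type*} [CommRing A] {I : Ideal A} {M N : Type*} [AddCommGroup M] [Module A M]
  [AddCommGroup N] [Module A N]

theorem one_tmul_eq_one_tmul_iff_sub_mem {x y : M} :
    (1 : A ⧸ I) ⊗ₜ[A] x = 1 ⊗ₜ y ↔ x - y ∈ (I • ⊤ : Submodule A M) := by
  rw [← (quotTensorEquivQuotSMul M I).injective.eq_iff, quotTensorEquivQuotSMul_mk_one_tmul,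
    quotTensorEquivQuotSMul_mk_one_tmul]
  exact Submodule.Quotient.eq _

theorem baseChange_quotient_eq_iff_range_sub_le {f g : M →ₗ[A] N} :
    f.baseChange (A ⧸ I) = g.baseChange (A ⧸ I) ↔ LinearMap.range (f - g) ≤ I • ⊤ := by
  refine ⟨?_, fun hfg => LinearMap.ext fun z => ?_⟩
  · rintro hfg _ ⟨x, rfl⟩
    exact one_tmul_eq_one_tmul_iff_sub_mem.1 (LinearMap.congr_fun hfg (1 ⊗ₜ x))
  · obtain ⟨x, rfl⟩ := TensorProduct.mk_surjective A M (A ⧸ I) Ideal.Quotient.mk_surjective z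
    exact one_tmul_eq_one_tmul_iff_sub_mem.2 (hfg ⟨x, rfl⟩)

theorem exists_baseChange_eq {B : Type*} [CommRing B] [Algebra A B]
    (hB : Function.Surjective (algebraMap A B)) [Module.Projective A M]
    (g : B ⊗[A] M →ₗ[B] B ⊗[A] N) : ∃ f : M →ₗ[A] N, f.baseChange B = g := by
  obtain ⟨f, hf⟩ := Module.projective_lifting_property (TensorProduct.mk A B N 1)
    (g.restrictScalars A ∘ₗ TensorProduct.mk A B M 1) (TensorProduct.mk_surjective A N B hB)
  refine ⟨f, ?_⟩
  ext x
  simpa using LinearMap.congr_fun hf x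

theorem surjective_of_baseChange_quotient_surjective [Module.Finite A N]
    (hI : I ≤ Ideal.jacobson ⊥) {f : M →ₗ[A] N}
    (hf : Function.Surjective (f.baseChange (A ⧸ I))) : Function.Surjective f := by
  rw [← LinearMap.range_eq_top, ← top_le_iff]
  refine Submodule.le_of_le_smul_of_le_jacobson_bot Module.Finite.fg_top hI fun y _ => ?_
  obtain ⟨z, hz⟩ := hf (1 ⊗ₜ y)
  obtain ⟨x, rfl⟩ := TensorProduct.mk_surjective A M (A ⧸ I) Ideal.Quotient.mk_surjective z
  have hy : y - f x ∈ (I • ⊤ : Submodule A N) := by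
    rw [← one_tmul_eq_one_tmul_iff_sub_mem, ← hz]
    rfl
  rw [← add_sub_cancel (f x) y]
  exact Submodule.add_mem_sup ⟨x, rfl⟩ hy

theorem exists_linearEquiv_baseChange_eq [Module.Finite A M] [Module.Projective A M]
    [Module.Finite A N] [Module.Projective A N] (hI : I ≤ Ideal.jacobson ⊥)
    (β' : (A ⧸ I) ⊗[A] M ≃ₗ[A ⧸ I] (A ⧸ I) ⊗[A] N) :
    ∃ β : M ≃ₗ[A] N, β.toLinearMap.baseChange (A ⧸ I) = β'.toLinearMap := by
  obtain ⟨β, hβ⟩ := exists_baseChange_eq Ideal.Quotient.mk_surjective β'.toLinearMap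
  obtain ⟨γ, hγ⟩ := exists_baseChange_eq Ideal.Quotient.mk_surjective β'.symm.toLinearMap
  have hβ_surj : Function.Surjective β :=
    surjective_of_baseChange_quotient_surjective hI (by rw [hβ]; exact β'.surjective)
  have hγ_surj : Function.Surjective γ :=
    surjective_of_baseChange_quotient_surjective hI (by rw [hγ]; exact β'.symm.surjective)
  have hγβ_inj : Function.Injective (γ ∘ₗ β) :=
    OrzechProperty.injective_of_surjective_endomorphism _ (hγ_surj.comp hβ_surj)
  exact ⟨.ofBijective β ⟨.of_comp (f := γ) hγβ_inj, hβ_surj⟩, hβ⟩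

theorem rangeRestrict_comp_subtype_of_isIdempotentElem {e : Module.End A M}
    (he : IsIdempotentElem e) :
    e.rangeRestrict ∘ₗ (LinearMap.range e).subtype = LinearMap.id := by
  ext1 ⟨_, x, rfl⟩
  exact Subtype.ext (LinearMap.congr_fun he.eq x)

theorem nonempty_tensor_range_linearEquiv {B Q : Type*} [CommRing B] [Algebra A B] [AddCommGroup Q]
    [Module B Q] {e : Module.End A M} (he : IsIdempotentElem e) {π : B ⊗[A] M →ₗ[B] Q}
    {σ : Q →ₗ[B] B ⊗[A] M} (hπσ : π ∘ₗ σ = LinearMap.id) (heB : e.baseChange B = σ ∘ₗ π) :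
    Nonempty (B ⊗[A] LinearMap.range e ≃ₗ[B] Q) := by
  let i := (LinearMap.range e).subtype
  let r := e.rangeRestrict
  have hri : r ∘ₗ i = LinearMap.id := rangeRestrict_comp_subtype_of_isIdempotentElem he
  have hir : i.baseChange B ∘ₗ r.baseChange B = σ ∘ₗ π := by
    rw [← LinearMap.baseChange_comp, ← heB]; rfl
  have hriB : r.baseChange B ∘ₗ i.baseChange B = LinearMap.id := by
    rw [← LinearMap.baseChange_comp, hri, LinearMap.baseChange_id]
  refine ⟨.ofLinearMap (π ∘ₗ i.baseChange B) (r.baseChange B ∘ₗ σ) ?_ ?_⟩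
  · calc _ = π ∘ₗ (i.baseChange B ∘ₗ r.baseChange B) ∘ₗ σ := rfl
      _ = (π ∘ₗ σ) ∘ₗ (π ∘ₗ σ) := by rw [hir]; rfl
      _ = LinearMap.id := by rw [hπσ, LinearMap.id_comp]
  · calc _ = r.baseChange B ∘ₗ (σ ∘ₗ π) ∘ₗ i.baseChange B := rfl
      _ = (r.baseChange B ∘ₗ i.baseChange B) ∘ₗ (r.baseChange B ∘ₗ i.baseChange B) := by
        rw [← hir]; rfl
      _ = LinearMap.id := by rw [hriB, LinearMap.id_comp]

theorem exists_isIdempotentElem_baseChange_eq [HenselianRing A I] [Module.Finite A M]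
    [Module.Projective A M] {ε : Module.End (A ⧸ I) ((A ⧸ I) ⊗[A] M)} (hε : IsIdempotentElem ε) :
    ∃ e : Module.End A M, IsIdempotentElem e ∧ e.baseChange (A ⧸ I) = ε := by
  obtain ⟨u, rfl⟩ := exists_baseChange_eq Ideal.Quotient.mk_surjective ε
  have hu : LinearMap.range (u ^ 2 - u) ≤ I • ⊤ := by
    rw [← baseChange_quotient_eq_iff_range_sub_le, pow_two, LinearMap.baseChange_mul]
    exact hε
  obtain ⟨e, he, heu⟩ := exists_isIdempotentElem_range_sub_le u hu
  exact ⟨e, he, baseChange_quotient_eq_iff_range_sub_le.2 heu⟩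

theorem exists_finite_projective_lift {A : Type u} [CommRing A] (I : Ideal A) [HenselianRing A I]
    (Q : Type*) [AddCommGroup Q] [Module (A ⧸ I) Q] [Module.Finite (A ⧸ I) Q]
    [Module.Projective (A ⧸ I) Q] :
    ∃ (P : Type u) (_ : AddCommGroup P) (_ : Module A P), Module.Finite A P ∧
      Module.Projective A P ∧ Nonempty ((A ⧸ I) ⊗[A] P ≃ₗ[A ⧸ I] Q) := by
  obtain ⟨n, p, s, -, -, hps⟩ := Module.Finite.exists_comp_eq_id_of_projective (A ⧸ I) Q
  let w := TensorProduct.piScalarRight A (A ⧸ I) (A ⧸ I) (Fin n)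
  let π : (A ⧸ I) ⊗[A] (Fin n → A) →ₗ[A ⧸ I] Q := p ∘ₗ w.toLinearMap
  let σ : Q →ₗ[A ⧸ I] (A ⧸ I) ⊗[A] (Fin n → A) := w.symm.toLinearMap ∘ₗ s
  have hπσ : π ∘ₗ σ = LinearMap.id := by
    rw [← hps]; ext x; simp [π, σ]
  have hσπ : IsIdempotentElem (σ ∘ₗ π : Module.End (A ⧸ I) _) := by
    calc σ ∘ₗ π ∘ₗ σ ∘ₗ π = σ ∘ₗ (π ∘ₗ σ) ∘ₗ π := rfl
      _ = σ ∘ₗ π := by rw [hπσ, LinearMap.id_comp]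
  obtain ⟨e, he, heσπ⟩ := exists_isIdempotentElem_baseChange_eq hσπ
  exact ⟨LinearMap.range e, inferInstance, inferInstance, inferInstance,
    .of_split _ _ (rangeRestrict_comp_subtype_of_isIdempotentElem he),
    nonempty_tensor_range_linearEquiv he hπσ heσπ⟩

end BaseChange

/-- Let (A, I) be a henselian pair. Then:
(i) every finitely generated projective A/I-module lifts to a finitely generated projective
A-module;
(ii) any isomorphism β̄ between the reductions mod I of two finitely generated projective
A-modules lifts to an isomorphism β : P₁ ≃ P₂ with β ⊗ id_{A/I} = β̄. -/
theorem stmt_17 (A : Type) [CommRing A] (I : Ideal A) [HenselianRing A I] :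
    (∀ (Q : Type) [AddCommGroup Q] [Module (A ⧸ I) Q],
        Module.Finite (A ⧸ I) Q → Module.Projective (A ⧸ I) Q →
        ∃ (P : Type) (_ : AddCommGroup P) (_ : Module A P),
          Module.Finite A P ∧ Module.Projective A P ∧
          Nonempty ((TensorProduct A (A ⧸ I) P) ≃ₗ[A ⧸ I] Q))
    ∧ (∀ (P₁ P₂ : Type) [AddCommGroup P₁] [Module A P₁] [AddCommGroup P₂] [Module A P₂],
        Module.Finite A P₁ → Module.Projective A P₁ →
        Module.Finite A P₂ → Module.Projective A P₂ →
        ∀ β' : (TensorProduct A (A ⧸ I) P₁) ≃ₗ[A ⧸ I] (TensorProduct A (A ⧸ I) P₂),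
          ∃ β : P₁ ≃ₗ[A] P₂, ∀ x : P₁,
            β' ((1 : A ⧸ I) ⊗ₜ[A] x) = (1 : A ⧸ I) ⊗ₜ[A] (β x)) := by
  refine ⟨?_, ?_⟩
  · intro Q _ _ _ _
    exact exists_finite_projective_lift I Q
  · intro P₁ P₂ _ _ _ _ _ _ _ _ β'
    obtain ⟨β, hβ⟩ := exists_linearEquiv_baseChange_eq HenselianRing.jac β'
    exact ⟨β, fun x => (LinearMap.congr_fun hβ (1 ⊗ₜ x)).symm⟩
end

section
/- Let (A, I) be a henselian pair of commutative rings. Then the quotient map A → A/I induces a bijection from the set of idempotent elements of A onto the set of idempotent elements of A/I; i.e. every idempotent of A/I lifts to a unique idempotent of A. -/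
/-!
Idempotents are the roots of `X ^ 2 - X`. The derivative `2 * X - 1` squares to `1` at an
idempotent, so every idempotent of `A ⧸ I` is a simple root and lifts. For uniqueness, if `e` and
`f` are idempotents congruent modulo an ideal inside the Jacobson radical, then `e * (1 - f)` and
`f * (1 - e)` are idempotents of the Jacobson radical, hence vanish, so that `e = e * f = f`.
-/

open Polynomial

section JacobsonRadical

variable {R : Type*} [CommRing R] {e f : R}

theorem eq_zero_of_isIdempotentElem_of_mem_jacobson_bot (he : IsIdempotentElem e)
    (hJ : e ∈ Ideal.jacobson (⊥ : Ideal R)) : e = 0 := by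
  have hunit : IsUnit (1 - e) :=
    Ideal.isUnit_of_sub_one_mem_jacobson_bot _ (by simpa using hJ)
  have hone : 1 - e = 1 := (IsIdempotentElem.iff_eq_one_of_isUnit hunit).mp he.one_sub
  exact sub_eq_self.mp hone

theorem mul_eq_left_of_sub_mem_jacobson_bot (he : IsIdempotentElem e) (hf : IsIdempotentElem f)
    (hJ : e - f ∈ Ideal.jacobson (⊥ : Ideal R)) : e * f = e := by
  have hmem : e * (1 - f) ∈ Ideal.jacobson (⊥ : Ideal R) := by
    have hfactor : e * (1 - f) = e * (e - f) := by rw [mul_sub, mul_sub, mul_one, he.eq]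
    exact hfactor ▸ Ideal.mul_mem_left _ e hJ
  have hzero : e * (1 - f) = 0 :=
    eq_zero_of_isIdempotentElem_of_mem_jacobson_bot (he.mul hf.one_sub) hmem
  rw [mul_sub, mul_one] at hzero
  exact (sub_eq_zero.mp hzero).symm

theorem eq_of_sub_mem_jacobson_bot_of_isIdempotentElem (he : IsIdempotentElem e)
    (hf : IsIdempotentElem f) (hJ : e - f ∈ Ideal.jacobson (⊥ : Ideal R)) : e = f :=
  calc
    e = e * f := (mul_eq_left_of_sub_mem_jacobson_bot he hf hJ).symm
    _ = f * e := mul_comm e f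
    _ = f := mul_eq_left_of_sub_mem_jacobson_bot hf he (sub_mem_comm_iff.mp hJ)

theorem injOn_mk_isIdempotentElem_of_le_jacobson_bot {I : Ideal R} (hI : I ≤ Ideal.jacobson ⊥) :
    Set.InjOn (Ideal.Quotient.mk I) {e : R | IsIdempotentElem e} :=
  fun _ he _ hf hef =>
    eq_of_sub_mem_jacobson_bot_of_isIdempotentElem he hf (hI (Ideal.Quotient.eq.mp hef))

end JacobsonRadical

section IdempotentPolynomial

variable {R : Type*} [Ring R]

theorem isUnit_two_mul_sub_one_of_isIdempotentElem {e : R} (he : IsIdempotentElem e) :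
    IsUnit (2 * e - 1) := by
  have hsq : (2 * e - 1) ^ 2 = 1 :=
    calc
      (2 * e - 1) ^ 2 = 4 * (e * e) - 4 * e + 1 := by noncomm_ring
      _ = 1 := by rw [he.eq, sub_self, zero_add]
  exact IsUnit.of_pow_eq_one hsq two_ne_zero

theorem monic_X_sq_sub_X : (X ^ 2 - X : R[X]).Monic :=
  monic_X_pow_sub (degree_X_le.trans_lt (by norm_num))

theorem isRoot_X_sq_sub_X_iff {a : R} : (X ^ 2 - X : R[X]).IsRoot a ↔ IsIdempotentElem a := by
  simp [IsIdempotentElem, sub_eq_zero, pow_two]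

theorem eval_derivative_X_sq_sub_X (a : R) :
    (X ^ 2 - X : R[X]).derivative.eval a = 2 * a - 1 := by
  simp [one_add_one_eq_two]

end IdempotentPolynomial

theorem surjOn_mk_isIdempotentElem {A : Type*} [CommRing A] (I : Ideal A) [HenselianRing A I] :
    Set.SurjOn (Ideal.Quotient.mk I)
      {e : A | IsIdempotentElem e} {e : A ⧸ I | IsIdempotentElem e} := by
  intro x hx
  obtain ⟨a, rfl⟩ := Ideal.Quotient.mk_surjective x
  have hroot : (X ^ 2 - X : A[X]).eval a ∈ I := by
    rw [← Ideal.Quotient.eq_zero_iff_mem]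
    simpa [IsIdempotentElem, sub_eq_zero, pow_two] using hx
  have hsimple : IsUnit (Ideal.Quotient.mk I ((X ^ 2 - X : A[X]).derivative.eval a)) := by
    rw [eval_derivative_X_sq_sub_X, map_sub, map_mul, map_ofNat, map_one]
    exact isUnit_two_mul_sub_one_of_isIdempotentElem hx
  obtain ⟨e, he, hea⟩ := HenselianRing.is_henselian _ monic_X_sq_sub_X a hroot hsimple
  exact ⟨e, isRoot_X_sq_sub_X_iff.mp he, Ideal.Quotient.eq.mpr hea⟩

theorem stmt_19_general {A : Type*} [CommRing A] (I : Ideal A) [HenselianRing A I] :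
    Set.BijOn (Ideal.Quotient.mk I)
      {e : A | IsIdempotentElem e} {e : A ⧸ I | IsIdempotentElem e} :=
  ⟨fun _ he => he.map (Ideal.Quotient.mk I),
    injOn_mk_isIdempotentElem_of_le_jacobson_bot HenselianRing.jac,
    surjOn_mk_isIdempotentElem I⟩

/-- Let (A, I) be a henselian pair of commutative rings. Then the quotient
map A → A/I induces a bijection from the set of idempotent elements of A onto the set of
idempotent elements of A/I. -/
theorem stmt_19 (A : Type) [CommRing A] (I : Ideal A) [HenselianRing A I] :
    Set.BijOn (Ideal.Quotient.mk I)
      {e : A | IsIdempotentElem e} {e : A ⧸ I | IsIdempotentElem e} := by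
  exact stmt_19_general I
end
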